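/- arXiv:1409.8424 — 2 statements merged into one kernel-verified Lean document; each statement's English description precedes it below -/
import Mathlib

section
/- Let P_Bip(n,m) = (2^m · m!/n^{2m}) · Σ κ(E), the sum over all bipartite multigraphs E on Fin n with m edges; this is the probability that a random multigraph with n vertices and m edges (drawn with probability proportional to its compensation factor) is bipartite. Then for every sequence m : ℕ → ℕ for which there exist 0 < a ≤ b < 1/2 with a ≤ m(n)/n ≤ b for all large n, the ratio P_Bip(n, m(n)) / ((1 − 2m/n)/(1 + 2m/n))^{1/4} tends to 1 as n → ∞ (where m = m(n)). -/
namespace Inhomog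

noncomputable section
/-- Compensation factor of a multigraph given as a multiset of unordered pairs. -/
def kappa {n : ℕ} (E : Multiset (Sym2 (Fin n))) : ℚ :=
  (∏ v : Fin n, ((2 : ℚ) ^ (E.count s(v, v)))⁻¹) *
    ∏ e ∈ E.toFinset, ((E.count e).factorial : ℚ)⁻¹

/-- A multigraph is bipartite if it admits a proper 2-coloring. -/
def IsBipartite {n : ℕ} (E : Multiset (Sym2 (Fin n))) : Prop :=
  ∃ c : Fin n → Fin 2, ∀ u v : Fin n, s(u, v) ∈ E → c u ≠ c v

open scoped Classical in
/-- Probability that a random multigraph with `n` vertices and `m` edges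
(drawn proportionally to its compensation factor) is bipartite. -/
def PBip (n m : ℕ) : ℝ :=
  2 ^ m * ((m.factorial : ℝ) / (n : ℝ) ^ (2 * m)) *
    ∑ E : Sym (Sym2 (Fin n)) m, if IsBipartite E.1 then ((kappa E.1 : ℝ)) else 0

/-!
A multigraph drawn with probability proportional to its compensation factor is a sequence of `m`
independent uniform ordered pairs of vertices with labels and orientations forgotten, since a
multigraph `E` arises from `2 ^ m * m! * κ(E)` such sequences.

Adding an edge to a bipartite multigraph destroys bipartiteness exactly when its ends are already
joined by walks of even length. On `N` vertices this gives `P (m + 1) = P m - S m / N ^ 2`, where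
`S m` sums, over all pairs of vertices, the probability that the multigraph is bipartite and the
pair is joined by even walks. Removing the edge at `u` that starts a path to `v` turns an even
connection into an odd one and vice versa. In the subcritical regime `x = 2 m / N < 1` this yields,
up to `O(1 / N)`, a linear recursion for the expected parity class sizes of a vertex, with solution
`P m / (1 - x ^ 2)` for the even and `P m * x / (1 - x ^ 2)` for the odd class. Hence
`P (m + 1) = P m * (1 - 1 / (N * (1 - x ^ 2))) + O(1 / N ^ 2)`, which is the Euler scheme with step
`2 / N` of `L' = -L / (2 * (1 - x ^ 2))`, `L 0 = 1`, whose solution is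
`L x = ((1 - x) / (1 + x)) ^ (1 / 4)`.
-/

section Colorings

variable {V : Type*} {E F : Set (Sym2 V)} {u v w x y z : V} {p : Fin 2}

/-- `c` is a proper 2-coloring of the graph with edge set `E`; a loop in `E` excludes this. -/
def IsProperColoring (E : Set (Sym2 V)) (c : V → Fin 2) : Prop :=
  ∀ u v, s(u, v) ∈ E → c u ≠ c v

/-- Bipartiteness of the graph with edge set `E`, in which loops count as odd cycles. -/
def TwoColorable (E : Set (Sym2 V)) : Prop :=
  ∃ c, IsProperColoring E c

/-- `u` and `v` lie in the same component of the graph with edge set `E`. -/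
def Linked (E : Set (Sym2 V)) (u v : V) : Prop :=
  (SimpleGraph.fromEdgeSet E).Reachable u v

/-- `z` is linked to `v` and `u` to `w`, in two different components: the situation at an edge from
`u` to `z` where the paths from `u` to `v` and to `w` part. -/
def LinkedApart (E : Set (Sym2 V)) (z v u w : V) : Prop :=
  Linked E z v ∧ Linked E u w ∧ ¬ Linked E z u

/-- The graph with edge set `E` is bipartite, and its walks from `u` to `v` exist and have length
congruent to `p` modulo 2. The parity is read off a 2-coloring, so walks need not be counted. -/
def ParityLinked (E : Set (Sym2 V)) (p : Fin 2) (u v : V) : Prop :=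
  Linked E u v ∧ ∃ c, IsProperColoring E c ∧ c v = c u + p

lemma IsProperColoring.mono {c : V → Fin 2} (hEF : E ⊆ F) (hc : IsProperColoring F c) :
    IsProperColoring E c :=
  fun u v h => hc u v (hEF h)

lemma isProperColoring_insert {c : V → Fin 2} :
    IsProperColoring (insert s(u, w) E) c ↔ c u ≠ c w ∧ IsProperColoring E c := by
  refine ⟨fun h => ⟨h u w (.inl rfl), h.mono (Set.subset_insert _ _)⟩, ?_⟩
  rintro ⟨huw, hc⟩ x y (hxy | hxy)
  · rcases Sym2.eq_iff.mp hxy with ⟨rfl, rfl⟩ | ⟨rfl, rfl⟩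
    exacts [huw, huw.symm]
  · exact hc x y hxy

lemma Linked.refl (E : Set (Sym2 V)) (u : V) : Linked E u u :=
  SimpleGraph.Reachable.refl u

lemma Linked.symm (h : Linked E u v) : Linked E v u :=
  SimpleGraph.Reachable.symm h

lemma Linked.trans (huv : Linked E u v) (hvw : Linked E v w) : Linked E u w :=
  SimpleGraph.Reachable.trans huv hvw

lemma Linked.mono (hEF : E ⊆ F) (h : Linked E u v) : Linked F u v :=
  SimpleGraph.Reachable.mono (SimpleGraph.fromEdgeSet_mono hEF) h

lemma linked_of_mem (h : s(u, v) ∈ E) : Linked E u v := by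
  by_cases huv : u = v
  · exact huv ▸ Linked.refl E u
  · exact SimpleGraph.Adj.reachable ((SimpleGraph.fromEdgeSet_adj E).mpr ⟨h, huv⟩)

lemma linked_empty_iff : Linked (∅ : Set (Sym2 V)) u v ↔ u = v := by
  rw [Linked, SimpleGraph.fromEdgeSet_empty, SimpleGraph.reachable_bot]

lemma Linked.of_insert (h : Linked (insert s(u, w) E) x y) :
    Linked E x y ∨ Linked E u y ∨ Linked E w y := by
  obtain ⟨p⟩ := h
  induction p with
  | nil => exact .inl (Linked.refl E _)
  | cons hadj _ ih =>
    refine ih.elim (fun hzy => ?_) .inr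
    rcases ((SimpleGraph.fromEdgeSet_adj _).mp hadj).1 with hmem | hmem
    · rcases Sym2.eq_iff.mp hmem with ⟨-, rfl⟩ | ⟨-, rfl⟩
      exacts [.inr (.inr hzy), .inr (.inl hzy)]
    · exact .inl ((linked_of_mem hmem).trans hzy)

lemma Linked.of_insert_of_not_linked (h : Linked (insert s(u, w) E) x y)
    (hx : ¬ Linked (insert s(u, w) E) u x) : Linked E x y := by
  have hE : E ⊆ insert s(u, w) E := Set.subset_insert _ _
  rcases h.symm.of_insert with hyx | hux | hwx
  · exact hyx.symm
  · exact absurd (hux.mono hE) hx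
  · exact absurd ((linked_of_mem (.inl rfl)).trans (hwx.mono hE)) hx

lemma LinkedApart.of_insert (h : LinkedApart (insert s(z, x) E) z v u w) (hxv : Linked E x v) :
    LinkedApart E x v u w := by
  refine ⟨hxv, h.2.1.of_insert_of_not_linked h.2.2, fun hxu => h.2.2 ?_⟩
  exact (linked_of_mem (.inl rfl)).trans (hxu.mono (Set.subset_insert _ _))

lemma Linked.exists_first_edge (h : Linked E u v) (huv : u ≠ v) :
    ∃ w, s(u, w) ∈ E ∧ Linked (E \ {s(u, w)}) w v := by
  obtain ⟨p, hp⟩ := SimpleGraph.Reachable.exists_isPath h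
  cases p with
  | nil => exact absurd rfl huv
  | @cons _ w _ hadj q =>
    refine ⟨w, ((SimpleGraph.fromEdgeSet_adj E).mp hadj).1, ?_⟩
    have hq := ((SimpleGraph.Walk.isTrail_cons hadj q).mp hp.isTrail).2
    rw [Linked, ← SimpleGraph.deleteEdges_fromEdgeSet]
    exact ⟨q.toDeleteEdge _ hq⟩

lemma IsProperColoring.add_eq_add {c d : V → Fin 2} (hc : IsProperColoring E c)
    (hd : IsProperColoring E d) (h : Linked E u v) : c u + d u = c v + d v := by
  obtain ⟨p⟩ := h
  induction p with
  | nil => rfl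
  | cons hadj _ ih =>
    have hmem := ((SimpleGraph.fromEdgeSet_adj E).mp hadj).1
    have := hc _ _ hmem
    have := hd _ _ hmem
    omega

open scoped Classical in
lemma IsProperColoring.flip_component {c : V → Fin 2} (hc : IsProperColoring E c) (u : V) :
    IsProperColoring E fun x => c x + if Linked E u x then 1 else 0 := by
  intro x y hxy
  have hiff : Linked E u x ↔ Linked E u y :=
    ⟨fun h => h.trans (linked_of_mem hxy), fun h => h.trans (linked_of_mem hxy).symm⟩
  simp only [hiff, ne_eq, add_left_inj]
  exact hc x y hxy

lemma twoColorable_insert_iff :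
    TwoColorable (insert s(u, w) E) ↔ TwoColorable E ∧ ¬ ParityLinked E 0 u w := by
  classical
  simp only [TwoColorable, isProperColoring_insert]
  constructor
  · rintro ⟨c, huw, hc⟩
    refine ⟨⟨c, hc⟩, ?_⟩
    rintro ⟨hlinked, d, hd, hdw⟩
    have := hc.add_eq_add hd hlinked
    omega
  · rintro ⟨⟨c, hc⟩, hp⟩
    by_cases huw : c u = c w
    · have hlinked : ¬ Linked E u w := fun h => hp ⟨h, c, hc, by simp [huw]⟩
      refine ⟨_, ?_, hc.flip_component u⟩
      simp only [Linked.refl, hlinked, if_true, if_false, huw]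
      omega
    · exact ⟨c, huw, hc⟩

lemma parityLinked_self_iff : ParityLinked E p v v ↔ TwoColorable E ∧ p = 0 := by
  simp [ParityLinked, TwoColorable, Linked.refl]

lemma ParityLinked.twoColorable (h : ParityLinked E p u v) : TwoColorable E :=
  h.2.imp fun _ hc => hc.1

lemma ParityLinked.of_linked (h : ParityLinked (insert s(u, w) E) p u v) (hwv : Linked E w v) :
    ParityLinked E (p + 1) w v := by
  obtain ⟨-, c, hc, hcv⟩ := h
  obtain ⟨huw, hc⟩ := isProperColoring_insert.mp hc
  exact ⟨hwv, c, hc, by omega⟩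

lemma ParityLinked.insert (h : ParityLinked E (p + 1) w v) (huw : ¬ Linked E u w) :
    ParityLinked (insert s(u, w) E) p u v := by
  obtain ⟨hwv, c, hc, hcv⟩ := h
  obtain ⟨d, hd⟩ := twoColorable_insert_iff.mpr ⟨⟨c, hc⟩, fun h => huw h.1⟩
  obtain ⟨hduw, hdE⟩ := isProperColoring_insert.mp hd
  have := hc.add_eq_add hdE hwv
  exact ⟨(linked_of_mem (.inl rfl)).trans (hwv.mono (Set.subset_insert _ _)), d, hd, by omega⟩

end Colorings

section EdgeSequences

variable {V : Type*} {m : ℕ} {u v w w' : V}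

/-- The set of edges of a sequence `f`; a pair `(u, v)` encodes the edge between `u` and `v`, so a
uniform sequence of pairs is the random multigraph of the theorem with its edges labelled and
oriented. -/
def edgeSet (f : Fin m → V × V) : Set (Sym2 V) :=
  Set.range fun i => s((f i).1, (f i).2)

lemma edgeSet_zero (f : Fin 0 → V × V) : edgeSet f = ∅ :=
  Set.range_eq_empty _

lemma edgeSet_insertNth (i : Fin (m + 1)) (e : V × V) (g : Fin m → V × V) :
    edgeSet (i.insertNth e g : Fin (m + 1) → V × V) = insert s(e.1, e.2) (edgeSet g) := by
  ext x
  simp only [edgeSet, Set.mem_range, Set.mem_insert_iff, Fin.exists_iff_succAbove i,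
    Fin.insertNth_apply_same, Fin.insertNth_apply_succAbove, eq_comm]

lemma edgeSet_eq_insert (f : Fin (m + 1) → V × V) (i : Fin (m + 1)) :
    edgeSet f = insert s((f i).1, (f i).2) (edgeSet (i.removeNth f)) := by
  rw [← edgeSet_insertNth i, Fin.insertNth_self_removeNth]

lemma edgeSet_removeNth_eq_insert (f : Fin (m + 1) → V × V) {i j : Fin (m + 1)} (hij : i ≠ j) :
    edgeSet (i.removeNth f) =
      insert s((f j).1, (f j).2) ((fun k => s((f k).1, (f k).2)) '' {i, j}ᶜ) := by
  have hcompl : ({i}ᶜ : Set (Fin (m + 1))) = insert j {i, j}ᶜ := by grind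
  rw [← Set.image_insert_eq (f := fun k => s((f k).1, (f k).2)), ← hcompl, ← Fin.range_succAbove,
    ← Set.range_comp]
  rfl

lemma exists_linked_removeNth {f : Fin (m + 1) → V × V} (h : Linked (edgeSet f) u v)
    (huv : u ≠ v) :
    ∃ i w, s((f i).1, (f i).2) = s(u, w) ∧ Linked (edgeSet (i.removeNth f)) w v := by
  obtain ⟨w, ⟨i, hi⟩, hw⟩ := h.exists_first_edge huv
  refine ⟨i, w, hi, hw.mono ?_⟩
  rw [edgeSet_eq_insert f i, show s((f i).1, (f i).2) = s(u, w) from hi,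
    Set.sdiff_singleton_subset_iff]

lemma edgeSet_eq_insert_of_eq {f : Fin (m + 1) → V × V} {i : Fin (m + 1)}
    (hi : s((f i).1, (f i).2) = s(u, w)) :
    edgeSet f = insert s(u, w) (edgeSet (i.removeNth f)) :=
  hi ▸ edgeSet_eq_insert f i

-- Two different edges at `u` that both start a path to `v` close a cycle through `u`, so removing
-- one of them leaves its ends linked.
lemma eq_of_linked_removeNth {f : Fin (m + 1) → V × V} {i i' : Fin (m + 1)}
    (hi : s((f i).1, (f i).2) = s(u, w)) (huw : ¬ Linked (edgeSet (i.removeNth f)) u w)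
    (hwv : Linked (edgeSet (i.removeNth f)) w v)
    (hi' : s((f i').1, (f i').2) = s(u, w')) (huw' : ¬ Linked (edgeSet (i'.removeNth f)) u w')
    (hwv' : Linked (edgeSet (i'.removeNth f)) w' v) : i = i' := by
  by_contra hne
  have hremove := edgeSet_removeNth_eq_insert f hne
  have hremove' := edgeSet_removeNth_eq_insert f (Ne.symm hne)
  rw [hi'] at hremove
  rw [hi, Set.pair_comm] at hremove'
  rw [hremove] at huw hwv
  rw [hremove'] at huw' hwv'
  have hww' := (hwv.of_insert_of_not_linked huw).trans (hwv'.of_insert_of_not_linked huw').symm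
  exact huw ((linked_of_mem (.inl rfl)).trans (hww'.symm.mono (Set.subset_insert _ _)))

end EdgeSequences

section Probability

open scoped BigOperators

variable {V : Type*} [Fintype V] {m : ℕ} {P Q : Set (Sym2 V) → Prop}

open scoped Classical in
/-- The probability that the edge set of a sequence of `m` independent uniform edges, each an
ordered pair of vertices, has the property `Q`. -/
def prob (m : ℕ) (Q : Set (Sym2 V) → Prop) : ℝ :=
  𝔼 f : Fin m → V × V, if Q (edgeSet f) then 1 else 0

lemma prob_nonneg : 0 ≤ prob m Q :=
  Finset.expect_nonneg fun _ _ => by positivity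

lemma prob_mono (h : ∀ E, P E → Q E) : prob m P ≤ prob m Q :=
  Finset.expect_le_expect fun f _ => by
    by_cases hP : P (edgeSet f)
    · simp [hP, h _ hP]
    · simp only [hP, if_false]; positivity

lemma prob_or_le : prob m (fun E => P E ∨ Q E) ≤ prob m P + prob m Q := by
  simp only [prob, ← Finset.expect_add_distrib]
  exact Finset.expect_le_expect fun f _ => by
    by_cases hP : P (edgeSet f) <;> by_cases hQ : Q (edgeSet f) <;> simp [hP, hQ]

lemma prob_and_not : prob m (fun E => P E ∧ ¬ Q E) = prob m P - prob m (fun E => P E ∧ Q E) := by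
  simp only [prob, ← Finset.expect_sub_distrib]
  exact Finset.expect_congr rfl fun f _ => by
    by_cases hP : P (edgeSet f) <;> by_cases hQ : Q (edgeSet f) <;> simp [hP, hQ]

open scoped Classical in
lemma prob_zero : prob 0 Q = if Q ∅ then 1 else 0 := by
  simp only [prob, edgeSet_zero, Fintype.expect_const]

lemma prob_le_one : prob m Q ≤ 1 := by
  classical
  rw [prob, Fintype.expect_eq_sum_div_card, Finset.sum_boole]
  exact div_le_one_of_le₀ (Nat.cast_le.mpr (Finset.card_le_univ _)) (Nat.cast_nonneg _)

lemma prob_eq_zero (hQ : ∀ E, ¬ Q E) : prob m Q = 0 := by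
  simp only [prob, hQ, if_false, Finset.expect_const_zero]

/-- The mean degree of a multigraph with `m` edges on `V`. -/
def meanDegree (V : Type*) [Fintype V] (m : ℕ) : ℝ :=
  2 * m / Fintype.card V

lemma expect_sum_removeNth {α : Type*} [Fintype α] (G : α → (Fin m → α) → ℝ) :
    𝔼 f : Fin (m + 1) → α, ∑ i, G (f i) (i.removeNth f) = (m + 1) * 𝔼 e, 𝔼 g, G e g := by
  have hexpose (i : Fin (m + 1)) :
      𝔼 f : Fin (m + 1) → α, G (f i) (i.removeNth f) = 𝔼 e, 𝔼 g, G e g := by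
    rw [← Finset.expect_product', Finset.univ_product_univ]
    refine (Fintype.expect_equiv (Fin.insertNthEquiv (fun _ => α) i) _ _ fun x => ?_).symm
    simp [Fin.insertNthEquiv]
  simp [Finset.expect_sum_comm, hexpose]

lemma prob_succ_eq_expect (Q : Set (Sym2 V) → Prop) :
    prob (m + 1) Q = 𝔼 e : V × V, prob m fun E => Q (insert s(e.1, e.2) E) := by
  classical
  simp only [prob]
  rw [← Finset.expect_product', Finset.univ_product_univ]
  refine (Fintype.expect_equiv (Fin.insertNthEquiv (fun _ => V × V) 0) _ _ fun x => ?_).symm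
  simp only [Fin.insertNthEquiv, Equiv.coe_fn_mk, edgeSet_insertNth]

lemma card_filter_mk_eq [DecidableEq V] (u w : V) :
    ({e : V × V | s(e.1, e.2) = s(u, w)} : Finset (V × V)).card = if w = u then 1 else 2 := by
  have hpairs : ({e : V × V | s(e.1, e.2) = s(u, w)} : Finset (V × V)) = {(u, w), (w, u)} := by
    ext ⟨a, b⟩
    simp
  rw [hpairs]
  split_ifs with hwu
  · simp [hwu]
  · exact Finset.card_pair fun h => hwu (Prod.ext_iff.mp h).2

open scoped Classical in
lemma expect_edge_eq (u w : V) :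
    𝔼 e : V × V, (if s(e.1, e.2) = s(u, w) then (1 : ℝ) else 0) =
      (if w = u then 1 else 2) / (Fintype.card V : ℝ) ^ 2 := by
  rw [Fintype.expect_eq_sum_div_card, Finset.sum_boole, card_filter_mk_eq, Fintype.card_prod]
  push_cast
  rw [sq]

lemma meanDegree_nonneg : 0 ≤ meanDegree V m := by
  unfold meanDegree
  positivity

lemma meanDegree_succ : meanDegree V (m + 1) = meanDegree V m + 2 / Fintype.card V := by
  simp only [meanDegree, Nat.cast_add, Nat.cast_one]
  ring

lemma meanDegree_le_succ : meanDegree V m ≤ meanDegree V (m + 1) := by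
  rw [meanDegree_succ]
  exact le_add_of_nonneg_right (by positivity)

lemma meanDegree_succ_div_card :
    meanDegree V (m + 1) / Fintype.card V = (m + 1) * (2 / (Fintype.card V : ℝ) ^ 2) := by
  rw [meanDegree]
  push_cast
  ring

/-! ### Exposing an edge -/

open scoped Classical in
/-- The ways to expose an edge of `f` at `u`: pairs `(i, w)` such that the `i`-th edge joins `u` to
`w` and the remaining edges have the property `Q w`. -/
def exposures (Q : V → Set (Sym2 V) → Prop) (u : V) (f : Fin (m + 1) → V × V) :
    Finset (Fin (m + 1) × V) :=
  {iw | s((f iw.1).1, (f iw.1).2) = s(u, iw.2) ∧ Q iw.2 (edgeSet (iw.1.removeNth f))}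

open scoped Classical in
lemma mem_exposures {Q : V → Set (Sym2 V) → Prop} {u w : V} {f : Fin (m + 1) → V × V}
    {i : Fin (m + 1)} : (i, w) ∈ exposures Q u f ↔
      s((f i).1, (f i).2) = s(u, w) ∧ Q w (edgeSet (i.removeNth f)) := by
  simp only [exposures, Finset.mem_filter, Finset.mem_univ, true_and]

-- The `i`-th edge is independent of the remaining `m`, which turns a count of exposures into
-- probabilities for one edge fewer.
open scoped Classical in
lemma expect_card_exposures (Q : V → Set (Sym2 V) → Prop) (u : V) :
    𝔼 f : Fin (m + 1) → V × V, ((exposures Q u f).card : ℝ) =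
      (m + 1) * ∑ w, (if w = u then 1 else 2) / (Fintype.card V : ℝ) ^ 2 * prob m (Q w) := by
  have hcard (f : Fin (m + 1) → V × V) : ((exposures Q u f).card : ℝ) =
      ∑ i, ∑ w, (if s((f i).1, (f i).2) = s(u, w) then 1 else 0) *
        (if Q w (edgeSet (i.removeNth f)) then 1 else 0) := by
    rw [exposures, Finset.natCast_card_filter, Fintype.sum_prod_type]
    simp only [ite_and, ite_mul, one_mul, zero_mul]
  rw [Finset.expect_congr rfl fun f _ => hcard f, expect_sum_removeNth fun e g =>
    ∑ w, (if s(e.1, e.2) = s(u, w) then (1 : ℝ) else 0) * (if Q w (edgeSet g) then 1 else 0)]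
  simp only [Finset.expect_sum_comm, ← Finset.mul_expect, ← Finset.expect_mul, expect_edge_eq, prob]

lemma prob_succ_le {Q : V → Set (Sym2 V) → Prop} {u : V}
    (hPQ : ∀ f : Fin (m + 1) → V × V, P (edgeSet f) → (exposures Q u f).Nonempty) :
    prob (m + 1) P ≤ meanDegree V (m + 1) / Fintype.card V * ∑ w, prob m (Q w) := by
  classical
  calc prob (m + 1) P ≤ 𝔼 f : Fin (m + 1) → V × V, ((exposures Q u f).card : ℝ) :=
        Finset.expect_le_expect fun f _ => by
          split_ifs with hP
          · exact_mod_cast (hPQ f hP).card_pos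
          · positivity
    _ ≤ (m + 1) * ∑ w, 2 / (Fintype.card V : ℝ) ^ 2 * prob m (Q w) := by
        rw [expect_card_exposures]
        gcongr with w
        · exact prob_nonneg
        · split_ifs <;> norm_num
    _ = meanDegree V (m + 1) / Fintype.card V * ∑ w, prob m (Q w) := by
        rw [← Finset.mul_sum, meanDegree_succ_div_card, mul_assoc]

lemma le_prob_succ {Q : V → Set (Sym2 V) → Prop} {u : V} (hu : ∀ E, ¬ Q u E)
    (hcard : ∀ f : Fin (m + 1) → V × V, (exposures Q u f).card ≤ 1)
    (hQP : ∀ f : Fin (m + 1) → V × V, (exposures Q u f).Nonempty → P (edgeSet f)) :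
    meanDegree V (m + 1) / Fintype.card V * ∑ w, prob m (Q w) ≤ prob (m + 1) P := by
  classical
  calc meanDegree V (m + 1) / Fintype.card V * ∑ w, prob m (Q w)
      = (m + 1) * ∑ w, 2 / (Fintype.card V : ℝ) ^ 2 * prob m (Q w) := by
        rw [← Finset.mul_sum, meanDegree_succ_div_card, mul_assoc]
    _ = 𝔼 f : Fin (m + 1) → V × V, ((exposures Q u f).card : ℝ) := by
        rw [expect_card_exposures]
        refine congrArg _ (Finset.sum_congr rfl fun w _ => ?_)
        by_cases hwu : w = u
        · simp [hwu, prob_eq_zero hu]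
        · simp [hwu]
    _ ≤ prob (m + 1) P := Finset.expect_le_expect fun f _ => by
        split_ifs with hP
        · exact_mod_cast hcard f
        · simp [Finset.not_nonempty_iff_eq_empty.mp (mt (hQP f) hP)]

lemma le_of_meanDegree_recurrence {a : ℕ → ℝ} {A β : ℝ} (hβ : β < 1) (hA : 0 ≤ A)
    (hzero : a 0 ≤ A)
    (hsucc : ∀ k, meanDegree V (k + 1) ≤ β → a (k + 1) ≤ A + meanDegree V (k + 1) * a k)
    (hm : meanDegree V m ≤ β) : a m ≤ A * (1 - β)⁻¹ := by
  have hfix : A * (1 - β)⁻¹ = A + β * (A * (1 - β)⁻¹) := by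
    have : 1 - β ≠ 0 := by linarith
    field_simp
    ring
  have hβ0 : 0 ≤ β := meanDegree_nonneg.trans hm
  have hA' : 0 ≤ A * (1 - β)⁻¹ := mul_nonneg hA (inv_nonneg.mpr (by linarith))
  induction m with
  | zero =>
    rw [hfix]
    exact hzero.trans (le_add_of_nonneg_right (mul_nonneg hβ0 hA'))
  | succ k ih =>
    calc a (k + 1) ≤ A + meanDegree V (k + 1) * a k := hsucc k hm
      _ ≤ A + meanDegree V (k + 1) * (A * (1 - β)⁻¹) := by
        gcongr
        · exact meanDegree_nonneg
        · exact ih (meanDegree_le_succ.trans hm)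
      _ ≤ A + β * (A * (1 - β)⁻¹) := by gcongr
      _ = A * (1 - β)⁻¹ := hfix.symm

lemma sum_prob_succ_le {P : V → Set (Sym2 V) → Prop} {Q : V → V → Set (Sym2 V) → Prop} (v : V)
    (hPQ : ∀ u, u ≠ v → ∀ f : Fin (m + 1) → V × V,
      P u (edgeSet f) → (exposures (Q u) u f).Nonempty) :
    ∑ u, prob (m + 1) (P u) ≤
      prob (m + 1) (P v) +
        meanDegree V (m + 1) / Fintype.card V * ∑ u, ∑ w, prob m (Q u w) := by
  classical
  have hx : 0 ≤ meanDegree V (m + 1) / Fintype.card V :=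
    div_nonneg meanDegree_nonneg (Nat.cast_nonneg _)
  calc ∑ u, prob (m + 1) (P u)
      ≤ ∑ u, ((if u = v then prob (m + 1) (P v) else 0) +
          meanDegree V (m + 1) / Fintype.card V * ∑ w, prob m (Q u w)) := by
        refine Finset.sum_le_sum fun u _ => ?_
        have hsum : 0 ≤ ∑ w, prob m (Q u w) := Finset.sum_nonneg fun w _ => prob_nonneg
        by_cases huv : u = v
        · simpa [huv] using mul_nonneg hx (huv ▸ hsum)
        · simpa [huv] using prob_succ_le (hPQ u huv)
    _ = prob (m + 1) (P v) +
          meanDegree V (m + 1) / Fintype.card V * ∑ u, ∑ w, prob m (Q u w) := by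
        simp [Finset.sum_add_distrib, Finset.mul_sum]

lemma meanDegree_div_card_mul_card (V : Type*) [Fintype V] (m : ℕ) (a : ℝ) :
    meanDegree V m / Fintype.card V * (Fintype.card V * a) = meanDegree V m * a := by
  rcases eq_or_ne (Fintype.card V : ℝ) 0 with h | h
  · simp [meanDegree, h]
  · field_simp

lemma sum_prob_zero {P : V → Set (Sym2 V) → Prop} (v : V) (hP : ∀ u, u ≠ v → ¬ P u ∅) :
    ∑ u, prob 0 (P u) = prob 0 (P v) :=
  Fintype.sum_eq_single v fun u huv => by simp [prob_zero, hP u huv]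

variable {β : ℝ}

/-! ### Component sizes -/

lemma sum_prob_linked_le (hβ : β < 1) (hm : meanDegree V m ≤ β) (v : V) :
    ∑ u, prob m (fun E => Linked E u v) ≤ (1 - β)⁻¹ := by
  rw [← one_mul (1 - β)⁻¹]
  refine le_of_meanDegree_recurrence (a := fun m => ∑ u, prob m fun E => Linked E u v) hβ
    zero_le_one ?_ (fun k _ => ?_) hm
  · rw [sum_prob_zero v fun u huv h => huv (linked_empty_iff.mp h)]
    exact prob_le_one
  · calc ∑ u, prob (k + 1) (fun E => Linked E u v)
        ≤ prob (k + 1) (fun E => Linked E v v) + meanDegree V (k + 1) / Fintype.card V *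
            ∑ _u : V, ∑ w, prob k (fun E => Linked E w v) := by
          refine sum_prob_succ_le v fun u huv f hf => ?_
          obtain ⟨i, w, hi, hw⟩ := exists_linked_removeNth hf huv
          exact ⟨(i, w), mem_exposures.mpr ⟨hi, hw⟩⟩
      _ ≤ 1 + meanDegree V (k + 1) * ∑ u, prob k (fun E => Linked E u v) := by
          rw [Finset.sum_const, Finset.card_univ, nsmul_eq_mul, meanDegree_div_card_mul_card]
          gcongr
          exact prob_le_one

lemma meanDegree_zero_le (hm : meanDegree V m ≤ β) : meanDegree V 0 ≤ β :=
  le_trans (by simpa [meanDegree] using meanDegree_nonneg) hm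

lemma sum_prob_linkedApart_succ_le (m : ℕ) (v u w : V) :
    ∑ z, prob (m + 1) (fun E => LinkedApart E z v u w) ≤
      prob (m + 1) (fun E => LinkedApart E v v u w) +
        meanDegree V (m + 1) * ∑ z, prob m (fun E => LinkedApart E z v u w) := by
  rw [← meanDegree_div_card_mul_card, ← nsmul_eq_mul (Fintype.card V), ← Finset.card_univ,
    ← Finset.sum_const]
  refine sum_prob_succ_le v fun z hzv f hf => ?_
  obtain ⟨i, x, hi, hxv⟩ := exists_linked_removeNth hf.1 hzv
  rw [edgeSet_eq_insert_of_eq hi] at hf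
  exact ⟨(i, x), mem_exposures.mpr ⟨hi, hf.of_insert hxv⟩⟩

lemma sum_prob_linkedApart_le (hβ : β < 1) (hm : meanDegree V m ≤ β) (v : V) :
    (∑ w, ∑ u, ∑ z, prob m (fun E => LinkedApart E z v u w)) / Fintype.card V ≤
      ((1 - β)⁻¹) ^ 2 := by
  have hs : 0 ≤ (1 - β)⁻¹ := inv_nonneg.mpr (by linarith)
  have hroot {k : ℕ} (hk : meanDegree V k ≤ β) :
      (∑ w, ∑ u, prob k (fun E => LinkedApart E v v u w)) / Fintype.card V ≤ (1 - β)⁻¹ := by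
    refine div_le_of_le_mul₀ (Nat.cast_nonneg _) hs ?_
    rw [mul_comm, ← nsmul_eq_mul, ← Finset.card_univ]
    refine Finset.sum_le_card_nsmul _ _ _ fun w _ => le_trans ?_ (sum_prob_linked_le hβ hk w)
    exact Finset.sum_le_sum fun u _ => prob_mono fun E h => h.2.1
  rw [sq]
  refine le_of_meanDegree_recurrence (a := fun m => (∑ w, ∑ u, ∑ z,
    prob m (fun E => LinkedApart E z v u w)) / Fintype.card V) hβ hs ?_ (fun k hk => ?_) hm
  · convert hroot (meanDegree_zero_le hm) using 5 with w _ u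
    exact sum_prob_zero v fun z hzv h => hzv (linked_empty_iff.mp h.1)
  · calc (∑ w, ∑ u, ∑ z, prob (k + 1) (fun E => LinkedApart E z v u w)) / Fintype.card V
      _ ≤ (∑ w, ∑ u, (prob (k + 1) (fun E => LinkedApart E v v u w) +
            meanDegree V (k + 1) * ∑ z, prob k (fun E => LinkedApart E z v u w))) /
            Fintype.card V := by
          gcongr with w _ u
          exact sum_prob_linkedApart_succ_le k v u w
      _ = (∑ w, ∑ u, prob (k + 1) (fun E => LinkedApart E v v u w)) / Fintype.card V +
            meanDegree V (k + 1) *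
              ((∑ w, ∑ u, ∑ z, prob k (fun E => LinkedApart E z v u w)) / Fintype.card V) := by
          simp only [Finset.sum_add_distrib, ← Finset.mul_sum, add_div, mul_div_assoc]
      _ ≤ (1 - β)⁻¹ + meanDegree V (k + 1) *
            ((∑ w, ∑ u, ∑ z, prob k (fun E => LinkedApart E z v u w)) / Fintype.card V) := by
          gcongr
          exact hroot hk

lemma sum_prob_linked_and_linked_zero_le (v : V) :
    ∑ w, ∑ u, prob 0 (fun E => Linked E u v ∧ Linked E u w) ≤
      ∑ w, prob 0 (fun E => Linked E w v) := by
  refine Finset.sum_le_sum fun w _ => ?_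
  rw [sum_prob_zero v fun u huv h => huv (linked_empty_iff.mp h.1)]
  exact prob_mono fun E h => h.2.symm

lemma sum_prob_linked_and_linked_succ_le (m : ℕ) (v w : V) :
    ∑ u, prob (m + 1) (fun E => Linked E u v ∧ Linked E u w) ≤
      prob (m + 1) (fun E => Linked E w v) + meanDegree V (m + 1) *
        ((∑ u, prob m fun E => Linked E u v ∧ Linked E u w) +
          (∑ u, ∑ z, prob m fun E => LinkedApart E z v u w) / Fintype.card V) := by
  -- The far end `z` of the first edge of a path from `u` to `v` is linked to `w` as well, or `u` is
  -- linked to `w` by itself, apart from `z`.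
  calc ∑ u, prob (m + 1) (fun E => Linked E u v ∧ Linked E u w)
      ≤ prob (m + 1) (fun E => Linked E v v ∧ Linked E v w) +
          meanDegree V (m + 1) / Fintype.card V * ∑ u, ∑ z, prob m (fun E =>
            (Linked E z v ∧ Linked E z w) ∨ LinkedApart E z v u w) := by
        refine sum_prob_succ_le v fun u huv f ⟨hfv, hfw⟩ => ?_
        obtain ⟨i, z, hi, hzv⟩ := exists_linked_removeNth hfv huv
        rw [edgeSet_eq_insert_of_eq hi] at hfw
        refine ⟨(i, z), mem_exposures.mpr ⟨hi, ?_⟩⟩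
        by_cases hzw : Linked (edgeSet (i.removeNth f)) z w
        · exact .inl ⟨hzv, hzw⟩
        · have huw : Linked (edgeSet (i.removeNth f)) u w := by
            rcases hfw.of_insert with h | h | h
            exacts [h, h, absurd h hzw]
          exact .inr ⟨hzv, huw, fun hzu => hzw (hzu.trans huw)⟩
    _ ≤ prob (m + 1) (fun E => Linked E w v) + meanDegree V (m + 1) / Fintype.card V *
          ∑ u, ∑ z, (prob m (fun E => Linked E z v ∧ Linked E z w) +
            prob m (fun E => LinkedApart E z v u w)) := by
        gcongr ?_ + _ * ∑ u, ∑ z, ?_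
        · exact prob_mono fun E h => h.2.symm
        · exact div_nonneg meanDegree_nonneg (Nat.cast_nonneg _)
        · exact prob_or_le
    _ = prob (m + 1) (fun E => Linked E w v) + meanDegree V (m + 1) *
          ((∑ u, prob m fun E => Linked E u v ∧ Linked E u w) +
            (∑ u, ∑ z, prob m fun E => LinkedApart E z v u w) / Fintype.card V) := by
        simp only [Finset.sum_add_distrib, Finset.sum_const, Finset.card_univ, nsmul_eq_mul,
          mul_add, meanDegree_div_card_mul_card]
        ring

lemma sum_prob_linked_and_linked_le (hβ : β < 1) (hm : meanDegree V m ≤ β) (v : V) :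
    ∑ w, ∑ u, prob m (fun E => Linked E u v ∧ Linked E u w) ≤ ((1 - β)⁻¹) ^ 3 := by
  have hβ0 : 0 ≤ β := meanDegree_nonneg.trans hm
  set s := (1 - β)⁻¹ with hs
  have hs1 : 1 ≤ s := (one_le_inv₀ (by linarith)).mpr (by linarith)
  have hfix : s + β * s ^ 2 = s ^ 2 := by
    have : 1 - β ≠ 0 := by linarith
    rw [hs]
    field_simp
    ring
  rw [pow_succ]
  refine le_of_meanDegree_recurrence
    (a := fun m => ∑ w, ∑ u, prob m (fun E => Linked E u v ∧ Linked E u w)) hβ (by positivity)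
    ?_ (fun k hk => ?_) hm
  · exact (sum_prob_linked_and_linked_zero_le v).trans <|
      (sum_prob_linked_le hβ (meanDegree_zero_le hm) v).trans (le_self_pow₀ hs1 two_ne_zero)
  · have hR := (mul_le_mul_of_nonneg_left
      (sum_prob_linkedApart_le hβ (meanDegree_le_succ.trans hk) v) meanDegree_nonneg).trans
      (mul_le_mul_of_nonneg_right hk (sq_nonneg s))
    calc ∑ w, ∑ u, prob (k + 1) (fun E => Linked E u v ∧ Linked E u w)
      _ ≤ ∑ w, prob (k + 1) (fun E => Linked E w v) + meanDegree V (k + 1) *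
            ((∑ w, ∑ u, prob k fun E => Linked E u v ∧ Linked E u w) +
              (∑ w, ∑ u, ∑ z, prob k fun E => LinkedApart E z v u w) / Fintype.card V) := by
          rw [Finset.sum_div, ← Finset.sum_add_distrib, Finset.mul_sum, ← Finset.sum_add_distrib]
          exact Finset.sum_le_sum fun w _ => sum_prob_linked_and_linked_succ_le k v w
      _ ≤ s + (meanDegree V (k + 1) *
            (∑ w, ∑ u, prob k fun E => Linked E u v ∧ Linked E u w) + β * s ^ 2) := by
          rw [mul_add]
          gcongr
          exact sum_prob_linked_le hβ hk v
      _ = s ^ 2 + meanDegree V (k + 1) *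
            ∑ w, ∑ u, prob k fun E => Linked E u v ∧ Linked E u w := by
          linear_combination hfix

/-! ### Parity classes -/

/-- The probability that the random multigraph with `m` edges on `V` is bipartite. -/
def bipartiteProb (V : Type*) [Fintype V] (m : ℕ) : ℝ :=
  prob (V := V) m TwoColorable

lemma bipartiteProb_succ [Nonempty V] (m : ℕ) :
    bipartiteProb V (m + 1) = bipartiteProb V m -
      (∑ v : V, ∑ u, prob m fun E => ParityLinked E 0 u v) / (Fintype.card V : ℝ) ^ 2 := by
  have hexpose (e : V × V) : prob m (fun E => TwoColorable (insert s(e.1, e.2) E)) =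
      bipartiteProb V m - prob m fun E => ParityLinked E 0 e.1 e.2 := by
    simp only [twoColorable_insert_iff, prob_and_not, bipartiteProb]
    congr 2
    exact funext fun E => propext (and_iff_right_of_imp ParityLinked.twoColorable)
  rw [bipartiteProb, prob_succ_eq_expect, Finset.expect_congr rfl fun e _ => hexpose e,
    Finset.expect_sub_distrib, Fintype.expect_const,
    Fintype.expect_eq_sum_div_card fun e : V × V => prob m fun E => ParityLinked E 0 e.1 e.2,
    Fintype.sum_prod_type_right, Fintype.card_prod, Nat.cast_mul, sq]

lemma bipartiteProb_sub_succ_mem_Icc [Nonempty V] (hβ : β < 1) (hm : meanDegree V m ≤ β) :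
    bipartiteProb V m - bipartiteProb V (m + 1) ∈
      Set.Icc 0 ((1 - β)⁻¹ / Fintype.card V) := by
  rw [bipartiteProb_succ, sub_sub_cancel, sq]
  constructor
  · exact div_nonneg (Finset.sum_nonneg fun v _ => Finset.sum_nonneg fun u _ => prob_nonneg)
      (by positivity)
  · rw [← div_div]
    gcongr
    rw [div_le_iff₀ (by positivity), mul_comm, ← nsmul_eq_mul, ← Finset.card_univ]
    refine Finset.sum_le_card_nsmul _ _ _ fun v _ => le_trans ?_ (sum_prob_linked_le hβ hm v)
    exact Finset.sum_le_sum fun u _ => prob_mono fun E h => h.1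

/-- The expected number of vertices that even (`p = 0`) or odd (`p = 1`) walks join to `v`, on the
event that the random multigraph with `m` edges is bipartite. -/
def parityClassSize (m : ℕ) (p : Fin 2) (v : V) : ℝ :=
  ∑ u, prob m fun E => ParityLinked E p u v

lemma parityClassSize_eq_add_sum_ne [DecidableEq V] (m : ℕ) (p : Fin 2) (v : V) :
    parityClassSize m p v = (if p = 0 then bipartiteProb V m else 0) +
      ∑ u, if u = v then 0 else prob m fun E => ParityLinked E p u v := by
  have hv : (prob m fun E => ParityLinked E p v v) =
      if p = 0 then bipartiteProb V m else 0 := by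
    simp only [parityLinked_self_iff]
    split_ifs with hp
    · simp only [hp, and_true]
      rfl
    · exact prob_eq_zero fun E h => hp h.2
  rw [parityClassSize, ← hv, ← Fintype.sum_ite_eq v fun u => prob m fun E => ParityLinked E p u v,
    ← Finset.sum_add_distrib]
  refine Finset.sum_congr rfl fun u _ => ?_
  by_cases huv : u = v
  · simp [huv]
  · simp [huv, Ne.symm huv]

lemma prob_parityLinked_succ_le (m : ℕ) (p : Fin 2) {u v : V} (huv : u ≠ v) :
    (prob (m + 1) fun E => ParityLinked E p u v) ≤
      meanDegree V (m + 1) / Fintype.card V * parityClassSize m (p + 1) v := by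
  refine prob_succ_le (u := u) fun f hf => ?_
  obtain ⟨i, w, hi, hwv⟩ := exists_linked_removeNth hf.1 huv
  rw [edgeSet_eq_insert_of_eq hi] at hf
  exact ⟨(i, w), mem_exposures.mpr ⟨hi, hf.of_linked hwv⟩⟩

lemma card_exposures_le_one (f : Fin (m + 1) → V × V) (p : Fin 2) (u v : V) :
    (exposures (fun w E => ParityLinked E p w v ∧ ¬ Linked E u w) u f).card ≤ 1 := by
  rw [Finset.card_le_one]
  rintro ⟨i, w⟩ hw ⟨i', w'⟩ hw'
  obtain ⟨hi, hwv, huw⟩ := mem_exposures.mp hw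
  obtain ⟨hi', hwv', huw'⟩ := mem_exposures.mp hw'
  obtain rfl := eq_of_linked_removeNth hi huw hwv.1 hi' huw' hwv'.1
  exact Prod.ext rfl (Sym2.congr_right.mp (hi.symm.trans hi'))

-- The subtracted sum pays for exposed edges whose ends are linked by the other edges: those may
-- occur several times in one sequence, or close an odd cycle.
lemma le_prob_parityLinked_succ [DecidableEq V] (m : ℕ) (p : Fin 2) (u v : V) :
    meanDegree V (m + 1) / Fintype.card V *
        (parityClassSize m (p + 1) v - ∑ w, prob m fun E => Linked E w v ∧ Linked E w u) ≤
      if u = v then 0 else prob (m + 1) fun E => ParityLinked E p u v := by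
  calc meanDegree V (m + 1) / Fintype.card V *
        (parityClassSize m (p + 1) v - ∑ w, prob m fun E => Linked E w v ∧ Linked E w u)
      ≤ meanDegree V (m + 1) / Fintype.card V *
          ∑ w, prob m fun E => ParityLinked E (p + 1) w v ∧ ¬ Linked E u w := by
        simp only [prob_and_not, Finset.sum_sub_distrib, parityClassSize]
        gcongr ?_ * (_ - ∑ w, ?_)
        · exact div_nonneg meanDegree_nonneg (Nat.cast_nonneg _)
        · exact prob_mono fun E h => ⟨h.1.1, h.2.symm⟩
    _ ≤ if u = v then 0 else prob (m + 1) fun E => ParityLinked E p u v := by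
        split_ifs with huv
        · have hzero (w : V) :
              prob m (fun E => ParityLinked E (p + 1) w v ∧ ¬ Linked E u w) = 0 :=
            prob_eq_zero fun E h => h.2 (huv ▸ h.1.1.symm)
          simp [hzero]
        · refine le_prob_succ (fun E h => h.2 (Linked.refl E u))
            (fun f => card_exposures_le_one f _ u v) fun f => ?_
          rintro ⟨⟨i, w⟩, hw⟩
          obtain ⟨hi, hwv, huw⟩ := mem_exposures.mp hw
          exact edgeSet_eq_insert_of_eq hi ▸ hwv.insert huw

lemma meanDegree_mul_eq_sum (m : ℕ) (a : ℝ) :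
    meanDegree V m * a = ∑ _u : V, meanDegree V m / Fintype.card V * a := by
  rw [Finset.sum_const, Finset.card_univ, nsmul_eq_mul, mul_left_comm,
    meanDegree_div_card_mul_card]

lemma sum_prob_parityLinked_succ_le [DecidableEq V] (m : ℕ) (p : Fin 2) (v : V) :
    ∑ u, (if u = v then 0 else prob (m + 1) fun E => ParityLinked E p u v) ≤
      meanDegree V (m + 1) * parityClassSize m (p + 1) v := by
  rw [meanDegree_mul_eq_sum]
  refine Finset.sum_le_sum fun u _ => ?_
  split_ifs with huv
  · exact mul_nonneg (div_nonneg meanDegree_nonneg (Nat.cast_nonneg _))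
      (Finset.sum_nonneg fun _ _ => prob_nonneg)
  · exact prob_parityLinked_succ_le m p huv

lemma le_sum_prob_parityLinked_succ [DecidableEq V] (hβ : β < 1)
    (hm : meanDegree V (m + 1) ≤ β) (p : Fin 2) (v : V) :
    meanDegree V (m + 1) * parityClassSize m (p + 1) v - ((1 - β)⁻¹) ^ 3 / Fintype.card V ≤
      ∑ u, if u = v then 0 else prob (m + 1) fun E => ParityLinked E p u v := by
  have herror : meanDegree V (m + 1) / Fintype.card V *
      ∑ u, ∑ w, prob m (fun E => Linked E w v ∧ Linked E w u) ≤
        ((1 - β)⁻¹) ^ 3 / Fintype.card V := by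
    rw [div_mul_eq_mul_div]
    gcongr
    refine (mul_le_of_le_one_left ?_ (hm.trans hβ.le)).trans
      (sum_prob_linked_and_linked_le hβ (meanDegree_le_succ.trans hm) v)
    exact Finset.sum_nonneg fun _ _ => Finset.sum_nonneg fun _ _ => prob_nonneg
  refine (sub_le_sub_left herror _).trans ?_
  rw [meanDegree_mul_eq_sum, Finset.mul_sum, ← Finset.sum_sub_distrib]
  refine Finset.sum_le_sum fun u _ => ?_
  rw [← mul_sub]
  exact le_prob_parityLinked_succ m p u v

lemma abs_parityClassSize_succ_sub_le (hβ : β < 1) (hm : meanDegree V (m + 1) ≤ β)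
    (p : Fin 2) (v : V) :
    |parityClassSize (m + 1) p v - ((if p = 0 then bipartiteProb V (m + 1) else 0) +
      meanDegree V (m + 1) * parityClassSize m (p + 1) v)| ≤ ((1 - β)⁻¹) ^ 3 / Fintype.card V := by
  classical
  have : 0 ≤ ((1 - β)⁻¹) ^ 3 / (Fintype.card V : ℝ) := by
    have : 0 < 1 - β := by linarith
    positivity
  rw [parityClassSize_eq_add_sum_ne (m + 1), add_sub_add_left_eq_sub, abs_le]
  constructor
  · linarith [le_sum_prob_parityLinked_succ hβ hm p v]
  · linarith [sum_prob_parityLinked_succ_le m p v]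

/-- The limit of `parityClassSize m p v / bipartiteProb V m` at mean degree `x`: the number of
vertices at even (`p = 0`) or odd (`p = 1`) distance from the root of a Galton–Watson tree with
mean offspring `x`, in expectation. -/
def parityLimit (p : Fin 2) (x : ℝ) : ℝ :=
  (if p = 0 then 1 else x) / (1 - x ^ 2)

lemma parityLimit_eq_add (p : Fin 2) {x : ℝ} (hx : x ^ 2 ≠ 1) :
    parityLimit p x = (if p = 0 then 1 else 0) + x * parityLimit (p + 1) x := by
  have : 1 - x ^ 2 ≠ 0 := sub_ne_zero.mpr hx.symm
  fin_cases p <;> simp [parityLimit] <;> field_simp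
  ring

lemma parityLimit_mem_Icc (p : Fin 2) (hβ : β < 1) {x : ℝ} (hx : x ∈ Set.Icc 0 β) :
    parityLimit p x ∈ Set.Icc 0 (1 - β)⁻¹ := by
  obtain ⟨hx0, hxβ⟩ := hx
  have hden : 1 - β ≤ 1 - x ^ 2 := by nlinarith
  have hden0 : 0 < 1 - β := by linarith
  have hnum : (if p = 0 then 1 else x) ∈ Set.Icc 0 1 := by
    split_ifs
    exacts [⟨zero_le_one, le_rfl⟩, ⟨hx0, hxβ.trans hβ.le⟩]
  rw [parityLimit, inv_eq_one_div]
  exact ⟨div_nonneg hnum.1 (hden0.trans_le hden).le, div_le_div₀ zero_le_one hnum.2 hden0 hden⟩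

lemma exists_lipschitzOnWith_of_contDiffOn {f : ℝ → ℝ} {a b : ℝ}
    (hf : ContDiffOn ℝ 1 f (Set.Icc a b)) : ∃ K, LipschitzOnWith K f (Set.Icc a b) :=
  LocallyLipschitzOn.exists_lipschitzOnWith_of_compact isCompact_Icc
    fun _ hx => (hf _ hx).exists_lipschitzOnWith (convex_Icc a b)

lemma contDiffOn_parityLimit (p : Fin 2) (hβ : β < 1) :
    ContDiffOn ℝ 1 (parityLimit p) (Set.Icc 0 β) := by
  have hden : ∀ x ∈ Set.Icc 0 β, 1 - x ^ 2 ≠ 0 := fun x hx => by nlinarith [hx.1, hx.2]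
  unfold parityLimit
  split_ifs <;> fun_prop (disch := assumption)

lemma meanDegree_mem_Icc (hm : meanDegree V m ≤ β) : meanDegree V m ∈ Set.Icc 0 β :=
  ⟨meanDegree_nonneg, hm⟩

lemma abs_bipartiteProb_mul_sub_succ_le [Nonempty V] {C : NNReal} {p : Fin 2} (hβ : β < 1)
    (hm : meanDegree V (m + 1) ≤ β) (hC : LipschitzOnWith C (parityLimit p) (Set.Icc 0 β)) :
    |bipartiteProb V m * parityLimit p (meanDegree V m) -
      bipartiteProb V (m + 1) * parityLimit p (meanDegree V (m + 1))| ≤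
        (((1 - β)⁻¹) ^ 2 + 2 * C) / Fintype.card V := by
  have hm' := meanDegree_le_succ.trans hm
  have hP := bipartiteProb_sub_succ_mem_Icc hβ hm'
  have hψ := parityLimit_mem_Icc p hβ (meanDegree_mem_Icc hm')
  have hlip := hC.dist_le_mul _ (meanDegree_mem_Icc hm') _ (meanDegree_mem_Icc hm)
  rw [Real.dist_eq, dist_comm, Real.dist_eq, meanDegree_succ, add_sub_cancel_left,
    abs_of_nonneg (a := 2 / (Fintype.card V : ℝ)) (by positivity), ← meanDegree_succ] at hlip
  set P := bipartiteProb V m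
  set P' := bipartiteProb V (m + 1)
  set ψ := parityLimit p (meanDegree V m)
  set ψ' := parityLimit p (meanDegree V (m + 1))
  calc |P * ψ - P' * ψ'| = |(P - P') * ψ + P' * (ψ - ψ')| := by ring_nf
    _ ≤ |P - P'| * |ψ| + |P'| * |ψ - ψ'| := by
        simpa only [abs_mul] using abs_add_le ((P - P') * ψ) (P' * (ψ - ψ'))
    _ ≤ (1 - β)⁻¹ / Fintype.card V * (1 - β)⁻¹ + 1 * (C * (2 / Fintype.card V)) := by
        rw [abs_of_nonneg hP.1, abs_of_nonneg hψ.1, abs_of_nonneg (a := P') prob_nonneg]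
        gcongr
        exacts [hψ.1, hP.2, hψ.2, prob_le_one]
    _ = (((1 - β)⁻¹) ^ 2 + 2 * C) / Fintype.card V := by ring

lemma abs_parityClassSize_succ_sub_limit_le {C : NNReal} {p : Fin 2} (hβ : β < 1)
    (hm : meanDegree V (m + 1) ≤ β) (hC : LipschitzOnWith C (parityLimit (p + 1)) (Set.Icc 0 β))
    (v : V) :
    |parityClassSize (m + 1) p v -
        bipartiteProb V (m + 1) * parityLimit p (meanDegree V (m + 1))| ≤
      (((1 - β)⁻¹) ^ 3 + ((1 - β)⁻¹) ^ 2 + 2 * C) / Fintype.card V +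
        meanDegree V (m + 1) * |parityClassSize m (p + 1) v -
          bipartiteProb V m * parityLimit (p + 1) (meanDegree V m)| := by
  have : Nonempty V := ⟨v⟩
  have hrec := abs_parityClassSize_succ_sub_le hβ hm p v
  have hlip := abs_bipartiteProb_mul_sub_succ_le hβ hm hC
  have hx0 : 0 ≤ meanDegree V (m + 1) := meanDegree_nonneg
  rw [parityLimit_eq_add p (by nlinarith)]
  set x := meanDegree V (m + 1)
  set t := parityClassSize m (p + 1) v
  set P := bipartiteProb V m
  set P' := bipartiteProb V (m + 1)
  set ψ := parityLimit (p + 1) (meanDegree V m)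
  set ψ' := parityLimit (p + 1) x
  calc |parityClassSize (m + 1) p v - P' * ((if p = 0 then 1 else 0) + x * ψ')|
      = |(parityClassSize (m + 1) p v - ((if p = 0 then P' else 0) + x * t)) +
          (x * (t - P * ψ) + x * (P * ψ - P' * ψ'))| := by
        congr 1
        split_ifs <;> ring
    _ ≤ ((1 - β)⁻¹) ^ 3 / Fintype.card V +
          (x * |t - P * ψ| + 1 * ((((1 - β)⁻¹) ^ 2 + 2 * C) / Fintype.card V)) := by
        refine (abs_add_le _ _).trans (add_le_add hrec ((abs_add_le _ _).trans ?_))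
        rw [abs_mul, abs_mul, abs_of_nonneg hx0]
        gcongr
        exact hm.trans hβ.le
    _ = (((1 - β)⁻¹) ^ 3 + ((1 - β)⁻¹) ^ 2 + 2 * C) / Fintype.card V + x * |t - P * ψ| := by ring

lemma parityClassSize_zero (p : Fin 2) (v : V) :
    parityClassSize 0 p v = bipartiteProb V 0 * parityLimit p (meanDegree V 0) := by
  classical
  have hne (u : V) : (if u = v then 0 else prob 0 fun E => ParityLinked E p u v) = 0 := by
    split_ifs with huv
    · rfl
    · rw [prob_zero, if_neg fun h => huv (linked_empty_iff.mp h.1)]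
  simp [parityClassSize_eq_add_sum_ne, hne, meanDegree, parityLimit]

lemma exists_abs_parityClassSize_sub_le (hβ : β < 1) :
    ∃ K : ℝ, 0 ≤ K ∧ ∀ (V : Type*) [Fintype V] (m : ℕ), meanDegree V m ≤ β →
      ∀ (p : Fin 2) (v : V),
        |parityClassSize m p v - bipartiteProb V m * parityLimit p (meanDegree V m)| ≤
          K / Fintype.card V := by
  choose C hC using fun p => exists_lipschitzOnWith_of_contDiffOn (contDiffOn_parityLimit p hβ)
  have : 0 < (1 - β)⁻¹ := inv_pos.mpr (by linarith)
  set A : ℝ := ∑ p : Fin 2, (((1 - β)⁻¹) ^ 3 + ((1 - β)⁻¹) ^ 2 + 2 * C (p + 1)) with hA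
  refine ⟨A * (1 - β)⁻¹, by positivity, fun V _ m hm p v => ?_⟩
  set error : ℕ → Fin 2 → ℝ := fun k p =>
    |parityClassSize k p v - bipartiteProb V k * parityLimit p (meanDegree V k)| with herror
  calc error m p ≤ ∑ p, error m p :=
        Finset.single_le_sum (fun _ _ => abs_nonneg _) (Finset.mem_univ p)
    _ ≤ A / Fintype.card V * (1 - β)⁻¹ := by
        refine le_of_meanDegree_recurrence (a := fun k => ∑ p, error k p) hβ (by positivity)
          ?_ (fun k hk => ?_) hm
        · simp only [herror, parityClassSize_zero, sub_self, abs_zero, Finset.sum_const_zero]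
          positivity
        · calc ∑ p, error (k + 1) p
              ≤ ∑ p : Fin 2, ((((1 - β)⁻¹) ^ 3 + ((1 - β)⁻¹) ^ 2 + 2 * C (p + 1)) /
                  Fintype.card V + meanDegree V (k + 1) * error k (p + 1)) :=
                Finset.sum_le_sum fun p _ =>
                  abs_parityClassSize_succ_sub_limit_le hβ hk (hC (p + 1)) v
            _ = A / Fintype.card V + meanDegree V (k + 1) * ∑ p, error k p := by
                have hshift : ∑ p : Fin 2, error k (p + 1) = ∑ p, error k p :=
                  Equiv.sum_comp (Equiv.addRight 1) (error k)
                rw [Finset.sum_add_distrib, ← Finset.sum_div, ← Finset.mul_sum, hshift]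
    _ = A * (1 - β)⁻¹ / Fintype.card V := by ring

lemma exists_abs_bipartiteProb_succ_sub_le (hβ : β < 1) :
    ∃ K : ℝ, 0 ≤ K ∧ ∀ (V : Type*) [Fintype V] [Nonempty V] (m : ℕ), meanDegree V m ≤ β →
      |bipartiteProb V (m + 1) -
        bipartiteProb V m * (1 - parityLimit 0 (meanDegree V m) / Fintype.card V)| ≤
          K / (Fintype.card V : ℝ) ^ 2 := by
  obtain ⟨K, hK0, hK⟩ := exists_abs_parityClassSize_sub_le hβ
  refine ⟨K, hK0, fun V _ _ m hm => ?_⟩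
  set error : V → ℝ := fun v =>
    parityClassSize m 0 v - bipartiteProb V m * parityLimit 0 (meanDegree V m)
  have hsum : |∑ v, error v| ≤ K :=
    calc |∑ v, error v| ≤ ∑ _v : V, K / Fintype.card V :=
          (Finset.abs_sum_le_sum_abs _ _).trans (Finset.sum_le_sum fun v _ => hK V m hm 0 v)
      _ = K := by
          rw [Finset.sum_const, Finset.card_univ, nsmul_eq_mul, mul_div_cancel₀ _ (by positivity)]
  have hstep : bipartiteProb V (m + 1) -
      bipartiteProb V m * (1 - parityLimit 0 (meanDegree V m) / Fintype.card V) =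
        -((∑ v, error v) / (Fintype.card V : ℝ) ^ 2) := by
    rw [bipartiteProb_succ, Finset.sum_sub_distrib, Finset.sum_const, Finset.card_univ,
      nsmul_eq_mul]
    simp only [parityClassSize]
    field_simp
    ring
  rw [hstep, abs_neg, abs_div, abs_of_nonneg (a := (Fintype.card V : ℝ) ^ 2) (by positivity)]
  gcongr

/-! ### The Euler scheme -/

/-- The limiting probability of bipartiteness at mean degree `x`. -/
def limitProb (x : ℝ) : ℝ :=
  ((1 - x) / (1 + x)) ^ ((1 : ℝ) / 4)

lemma bipartiteProb_zero : bipartiteProb V 0 = 1 := by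
  classical
  rw [bipartiteProb, prob_zero, if_pos ⟨0, fun _ _ h => h.elim⟩]

lemma limitProb_zero : limitProb 0 = 1 := by
  simp [limitProb]

lemma limitProb_pos {x : ℝ} (hx : x ∈ Set.Ioo (-1) 1) : 0 < limitProb x :=
  Real.rpow_pos_of_pos (div_pos (by linarith [hx.2]) (by linarith [hx.1])) _

lemma hasDerivAt_limitProb {x : ℝ} (hx : x ∈ Set.Ioo (-1) 1) :
    HasDerivAt limitProb (-(limitProb x * parityLimit 0 x) / 2) x := by
  have hnum : 1 - x ≠ 0 := by linarith [hx.2]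
  have hden : 1 + x ≠ 0 := by linarith [hx.1]
  have hsq : 1 - x ^ 2 ≠ 0 := by
    rw [show 1 - x ^ 2 = (1 - x) * (1 + x) by ring]
    exact mul_ne_zero hnum hden
  have hquot : HasDerivAt (fun y : ℝ => (1 - y) / (1 + y)) (-2 / (1 + x) ^ 2) x := by
    convert! ((hasDerivAt_id' x).const_sub 1).div ((hasDerivAt_id' x).const_add 1) hden using 1
    ring
  convert! hquot.rpow_const (p := (1 : ℝ) / 4) (Or.inl (div_ne_zero hnum hden)) using 1
  rw [Real.rpow_sub_one (div_ne_zero hnum hden), limitProb, parityLimit, if_pos rfl]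
  field_simp
  ring

lemma antitoneOn_limitProb : AntitoneOn limitProb (Set.Icc 0 1) := fun x hx y hy hxy => by
  have hnum : 0 ≤ 1 - y := by linarith [hy.2]
  have hden : 0 < 1 + x := by linarith [hx.1]
  unfold limitProb
  gcongr
  · exact div_nonneg hnum (by linarith)
  · linarith

lemma contDiffOn_limitProb (hβ : β < 1) : ContDiffOn ℝ 1 limitProb (Set.Icc 0 β) := by
  have hden : ∀ x ∈ Set.Icc 0 β, 1 + x ≠ 0 := fun x hx => by linarith [hx.1]
  have hquot : ∀ x ∈ Set.Icc 0 β, (1 - x) / (1 + x) ≠ 0 := fun x hx =>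
    div_ne_zero (by linarith [hx.2]) (hden x hx)
  exact ContDiffOn.rpow_const_of_ne (by fun_prop (disch := assumption)) hquot

lemma abs_sub_sub_deriv_mul_le_of_lipschitzOnWith {f f' : ℝ → ℝ} {s : Set ℝ} {K : NNReal}
    (hs : Convex ℝ s) (hf : ∀ x ∈ s, HasDerivWithinAt f (f' x) s x) (hf' : LipschitzOnWith K f' s)
    {x y : ℝ} (hx : x ∈ s) (hy : y ∈ s) : |f y - f x - f' x * (y - x)| ≤ K * (y - x) ^ 2 := by
  have hsub : segment ℝ x y ⊆ s := hs.segment_subset hx hy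
  have hderiv : ∀ z ∈ segment ℝ x y,
      HasDerivWithinAt (fun z => f z - f' x * z) (f' z - f' x) (segment ℝ x y) z := fun z hz => by
    convert! ((hf z (hsub hz)).mono hsub).sub ((hasDerivWithinAt_id z _).const_mul (f' x)) using 1
    rw [mul_one]
  have hbound : ∀ z ∈ segment ℝ x y, ‖f' z - f' x‖ ≤ K * |y - x| := fun z hz => by
    refine (hf'.norm_sub_le (hsub hz) hx).trans ?_
    gcongr
    rw [← dist_eq_norm, ← Real.dist_eq, dist_comm z, dist_comm y]
    linarith [dist_add_dist_of_mem_segment hz, dist_nonneg (x := z) (y := y)]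
  have := (convex_segment x y).norm_image_sub_le_of_norm_hasDerivWithin_le hderiv hbound
    (left_mem_segment ℝ x y) (right_mem_segment ℝ x y)
  calc |f y - f x - f' x * (y - x)| = ‖f y - f' x * y - (f x - f' x * x)‖ := by
        rw [Real.norm_eq_abs]
        ring_nf
    _ ≤ K * |y - x| * ‖y - x‖ := this
    _ = K * (y - x) ^ 2 := by rw [Real.norm_eq_abs, mul_assoc, ← sq, sq_abs]

lemma exists_abs_limitProb_meanDegree_succ_sub_le (hβ : β < 1) :
    ∃ K : ℝ, 0 ≤ K ∧ ∀ (V : Type*) [Fintype V] (m : ℕ), meanDegree V (m + 1) ≤ β →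
      |limitProb (meanDegree V (m + 1)) -
        limitProb (meanDegree V m) * (1 - parityLimit 0 (meanDegree V m) / Fintype.card V)| ≤
          K / (Fintype.card V : ℝ) ^ 2 := by
  obtain ⟨C, hC⟩ := exists_lipschitzOnWith_of_contDiffOn
    (((contDiffOn_limitProb hβ).mul (contDiffOn_parityLimit 0 hβ)).neg.div_const 2)
  refine ⟨C * 2 ^ 2, by positivity, fun V _ m hm => ?_⟩
  have htaylor := abs_sub_sub_deriv_mul_le_of_lipschitzOnWith (convex_Icc 0 β)
    (fun x hx => (hasDerivAt_limitProb ⟨by linarith [hx.1], hx.2.trans_lt hβ⟩).hasDerivWithinAt)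
    hC (meanDegree_mem_Icc (meanDegree_le_succ.trans hm)) (meanDegree_mem_Icc hm)
  have hdiff : meanDegree V (m + 1) - meanDegree V m = 2 / Fintype.card V := by
    rw [meanDegree_succ, add_sub_cancel_left]
  rw [hdiff, div_pow, ← mul_div_assoc (C : ℝ)] at htaylor
  convert htaylor using 2
  ring

lemma parityLimit_div_card_mem_Icc [Nonempty V] (p : Fin 2) (hm : meanDegree V (m + 1) ≤ 1) :
    parityLimit p (meanDegree V m) / Fintype.card V ∈ Set.Icc 0 1 := by
  have hcard : 0 < (Fintype.card V : ℝ) := by positivity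
  have hgap : (Fintype.card V : ℝ)⁻¹ ≤ 1 - meanDegree V m := by
    rw [meanDegree_succ] at hm
    have : 2 / (Fintype.card V : ℝ) = 2 * (Fintype.card V : ℝ)⁻¹ := rfl
    linarith [inv_pos.mpr hcard]
  have hlt : meanDegree V m < 1 := by linarith [inv_pos.mpr hcard]
  obtain ⟨h0, h1⟩ := parityLimit_mem_Icc p hlt (meanDegree_mem_Icc le_rfl)
  exact ⟨by positivity, div_le_one_of_le₀ (h1.trans (inv_le_of_inv_le₀ hcard hgap)) hcard.le⟩

lemma abs_sub_le_abs_sub_add_of_abs_le_one {a a' b b' q K K' : ℝ} (hq : |q| ≤ 1)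
    (ha : |a' - a * q| ≤ K) (hb : |b' - b * q| ≤ K') : |a' - b'| ≤ |a - b| + (K + K') :=
  calc |a' - b'| = |(a - b) * q + ((a' - a * q) - (b' - b * q))| := by ring_nf
    _ ≤ |(a - b) * q| + |(a' - a * q) - (b' - b * q)| := abs_add_le _ _
    _ ≤ |a - b| + (K + K') := by
        refine add_le_add ?_ ((abs_sub _ _).trans (add_le_add ha hb))
        exact (abs_mul _ _).trans_le (mul_le_of_le_one_right (abs_nonneg _) hq)

lemma exists_abs_bipartiteProb_sub_limitProb_le (hβ : β < 1) :
    ∃ K : ℝ, ∀ (V : Type*) [Fintype V] [Nonempty V] (m : ℕ), meanDegree V m ≤ β →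
      |bipartiteProb V m - limitProb (meanDegree V m)| ≤ K / Fintype.card V := by
  obtain ⟨K, hK0, hK⟩ := exists_abs_bipartiteProb_succ_sub_le hβ
  obtain ⟨K', hK'0, hK'⟩ := exists_abs_limitProb_meanDegree_succ_sub_le hβ
  refine ⟨K + K', fun V _ _ m hm => ?_⟩
  have hsum : |bipartiteProb V m - limitProb (meanDegree V m)| ≤
      m * ((K + K') / (Fintype.card V : ℝ) ^ 2) := by
    induction m with
    | zero => simp [bipartiteProb_zero, meanDegree, limitProb_zero]
    | succ k ih =>
      have hk := meanDegree_le_succ.trans hm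
      obtain ⟨hψ0, hψ1⟩ := parityLimit_div_card_mem_Icc 0 (hm.trans hβ.le)
      have hq : |1 - parityLimit 0 (meanDegree V k) / Fintype.card V| ≤ 1 :=
        abs_le.mpr ⟨by linarith, sub_le_self _ hψ0⟩
      have hstep := abs_sub_le_abs_sub_add_of_abs_le_one hq (hK V k hk) (hK' V k hm)
      rw [← add_div] at hstep
      push_cast
      linarith [ih hk]
  have hm1 : (m : ℝ) / Fintype.card V ≤ 1 := by
    have : meanDegree V m = 2 * (m / Fintype.card V) := mul_div_assoc _ _ _
    have : 0 ≤ (m : ℝ) / Fintype.card V := by positivity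
    linarith
  calc |bipartiteProb V m - limitProb (meanDegree V m)|
      ≤ m * ((K + K') / (Fintype.card V : ℝ) ^ 2) := hsum
    _ = m / Fintype.card V * ((K + K') / Fintype.card V) := by ring
    _ ≤ (K + K') / Fintype.card V := mul_le_of_le_one_left (by positivity) hm1

lemma exists_abs_bipartiteProb_div_limitProb_sub_one_le (hβ : β < 1) :
    ∃ K : ℝ, ∀ (V : Type*) [Fintype V] [Nonempty V] (m : ℕ), meanDegree V m ≤ β →
      |bipartiteProb V m / limitProb (meanDegree V m) - 1| ≤ K / Fintype.card V := by
  obtain ⟨K, hK⟩ := exists_abs_bipartiteProb_sub_limitProb_le hβ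
  refine ⟨K / limitProb β, fun V _ _ m hm => ?_⟩
  have hx : 0 ≤ meanDegree V m := meanDegree_nonneg
  have hβ0 : 0 ≤ β := hx.trans hm
  have hLβ : 0 < limitProb β := limitProb_pos ⟨by linarith, hβ⟩
  have hL : limitProb β ≤ limitProb (meanDegree V m) :=
    antitoneOn_limitProb ⟨hx, hm.trans hβ.le⟩ ⟨hβ0, hβ.le⟩ hm
  have hLpos := hLβ.trans_le hL
  calc |bipartiteProb V m / limitProb (meanDegree V m) - 1|
      = |bipartiteProb V m - limitProb (meanDegree V m)| / limitProb (meanDegree V m) := by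
        rw [div_sub_one hLpos.ne', abs_div, abs_of_pos hLpos]
    _ ≤ K / Fintype.card V / limitProb β :=
        div_le_div₀ ((abs_nonneg _).trans (hK V m hm)) (hK V m hm) hLβ hL
    _ = K / limitProb β / Fintype.card V := div_right_comm _ _ _

/-- The multigraph with edge sequence `f`. -/
def edgeMultiset (f : Fin m → V × V) : Multiset (Sym2 V) :=
  Finset.univ.val.map fun i => s((f i).1, (f i).2)

end Probability

section Counting

variable {n m : ℕ}

lemma card_edgeMultiset (f : Fin m → Fin n × Fin n) : (edgeMultiset f).card = m := by
  rw [edgeMultiset, Multiset.card_map, Finset.card_val, Finset.card_univ, Fintype.card_fin]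

lemma edgeMultiset_cons (e : Fin n × Fin n) (f : Fin m → Fin n × Fin n) :
    edgeMultiset (Fin.cons e f : Fin (m + 1) → Fin n × Fin n) = s(e.1, e.2) ::ₘ edgeMultiset f := by
  simp [edgeMultiset, Fin.univ_succ, Function.comp_def]

lemma isBipartite_edgeMultiset_iff (f : Fin m → Fin n × Fin n) :
    IsBipartite (edgeMultiset f) ↔ TwoColorable (edgeSet f) := by
  simp [IsBipartite, TwoColorable, IsProperColoring, edgeMultiset, edgeSet]

lemma inv_kappa (E : Multiset (Sym2 (Fin n))) :
    (kappa E)⁻¹ = (∏ v : Fin n, 2 ^ E.count s(v, v)) * ∏ e, ((E.count e).factorial : ℚ) := by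
  have hfactorial : ∏ e ∈ E.toFinset, ((E.count e).factorial : ℚ)⁻¹ =
      ∏ e, ((E.count e).factorial : ℚ)⁻¹ :=
    Finset.prod_subset (Finset.subset_univ _) fun e _ he => by
      rw [Multiset.count_eq_zero.mpr (mt Multiset.mem_toFinset.mpr he), Nat.factorial_zero,
        Nat.cast_one, inv_one]
  rw [kappa, hfactorial, Finset.prod_inv_distrib, Finset.prod_inv_distrib, mul_inv, inv_inv,
    inv_inv]

lemma inv_kappa_cons (e : Sym2 (Fin n)) (E : Multiset (Sym2 (Fin n))) :
    (kappa (e ::ₘ E))⁻¹ =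
      (if e.IsDiag then 2 else 1) * (e ::ₘ E).count e * (kappa E)⁻¹ := by
  have hloop : ∏ v : Fin n, (2 : ℚ) ^ (e ::ₘ E).count s(v, v) =
      (∏ v : Fin n, 2 ^ E.count s(v, v)) * if e.IsDiag then 2 else 1 := by
    simp only [Multiset.count_cons, pow_add, Finset.prod_mul_distrib]
    congr 1
    induction e with
    | _ a b =>
      simp only [Sym2.mk_isDiag_iff]
      split_ifs with hab
      · simp [hab]
      · have hne (v : Fin n) : s(v, v) ≠ s(a, b) := fun h =>
          hab (Sym2.mk_isDiag_iff.mp (h ▸ Sym2.mk_isDiag_iff.mpr rfl))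
        simp [hne]
  have hfactorial : ∏ a, (((e ::ₘ E).count a).factorial : ℚ) =
      (∏ a, ((E.count a).factorial : ℚ)) * (e ::ₘ E).count e := by
    have hstep (a : Sym2 (Fin n)) : (((e ::ₘ E).count a).factorial : ℚ) =
        (E.count a).factorial * if a = e then ((e ::ₘ E).count e : ℚ) else 1 := by
      split_ifs with hae
      · rw [hae, Multiset.count_cons_self, Nat.factorial_succ, Nat.cast_mul, mul_comm]
      · rw [Multiset.count_cons_of_ne hae, mul_one]
    rw [Finset.prod_congr rfl fun a _ => hstep a, Finset.prod_mul_distrib, Fintype.prod_ite_eq']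
  rw [inv_kappa, inv_kappa, hloop, hfactorial]
  ring

lemma kappa_ne_zero (E : Multiset (Sym2 (Fin n))) : kappa E ≠ 0 :=
  ne_of_apply_ne Inv.inv <| by
    rw [inv_kappa, inv_zero]
    positivity

lemma kappa_eq_mul_kappa_cons (e : Sym2 (Fin n)) (E : Multiset (Sym2 (Fin n))) :
    kappa E = kappa (e ::ₘ E) * ((if e.IsDiag then 2 else 1) * (e ::ₘ E).count e) := by
  have hcons := inv_kappa_cons e E
  rwa [eq_mul_inv_iff_mul_eq₀ (kappa_ne_zero E), inv_mul_eq_iff_eq_mul₀ (kappa_ne_zero _)] at hcons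

lemma sum_loopWeight_mul_ite_eq (a : Sym2 (Fin n)) :
    ∑ e : Fin n × Fin n,
      (if s(e.1, e.2).IsDiag then 2 else 1) * (if s(e.1, e.2) = a then (1 : ℚ) else 0) = 2 := by
  have hweight (e : Fin n × Fin n) :
      (if s(e.1, e.2).IsDiag then 2 else 1) * (if s(e.1, e.2) = a then (1 : ℚ) else 0) =
        (if a.IsDiag then 2 else 1) * if s(e.1, e.2) = a then (1 : ℚ) else 0 := by
    by_cases he : s(e.1, e.2) = a <;> simp [he]
  rw [Finset.sum_congr rfl fun e _ => hweight e, ← Finset.mul_sum, Finset.sum_boole]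
  induction a with
  | _ c d =>
    rw [card_filter_mk_eq]
    by_cases hcd : c = d
    · simp [hcd]
    · simp [hcd, Ne.symm hcd]

lemma sum_loopWeight_mul_count (E : Multiset (Sym2 (Fin n))) :
    ∑ e : Fin n × Fin n, (if s(e.1, e.2).IsDiag then 2 else 1) * (E.count s(e.1, e.2) : ℚ) =
      2 * E.card := by
  induction E using Multiset.induction_on with
  | empty => simp
  | cons a E ih =>
    simp only [Multiset.count_cons, Nat.cast_add, Nat.cast_ite, Nat.cast_one, Nat.cast_zero,
      mul_add, Finset.sum_add_distrib, ih, sum_loopWeight_mul_ite_eq, Multiset.card_cons, mul_one]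

lemma card_filter_edgeMultiset_eq (E : Multiset (Sym2 (Fin n))) (hE : E.card = m) :
    (({f : Fin m → Fin n × Fin n | edgeMultiset f = E} : Finset _).card : ℚ) =
      2 ^ m * m.factorial * kappa E := by
  induction m generalizing E with
  | zero =>
    obtain rfl := Multiset.card_eq_zero.mp hE
    simp [edgeMultiset, kappa]
  | succ m ih =>
    have hfirst (e : Fin n × Fin n) :
        (({f : Fin m → Fin n × Fin n | s(e.1, e.2) ::ₘ edgeMultiset f = E} : Finset _).card : ℚ) =
          2 ^ m * m.factorial * kappa E *
            ((if s(e.1, e.2).IsDiag then 2 else 1) * E.count s(e.1, e.2)) := by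
      by_cases he : s(e.1, e.2) ∈ E
      · obtain ⟨E, rfl⟩ := Multiset.exists_cons_of_mem he
        simp only [Multiset.cons_inj_right]
        rw [ih E (by rwa [Multiset.card_cons, Nat.succ_inj] at hE),
          kappa_eq_mul_kappa_cons s(e.1, e.2) E, mul_assoc _ (kappa _)]
      · have hne (f : Fin m → Fin n × Fin n) : s(e.1, e.2) ::ₘ edgeMultiset f ≠ E := by
          rintro rfl
          exact he (Multiset.mem_cons_self _ _)
        simp [hne, Multiset.count_eq_zero.mpr he]
    calc (({f : Fin (m + 1) → Fin n × Fin n | edgeMultiset f = E} : Finset _).card : ℚ)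
        = ∑ e : Fin n × Fin n, (({f : Fin m → Fin n × Fin n |
            s(e.1, e.2) ::ₘ edgeMultiset f = E} : Finset _).card : ℚ) := by
          simp only [Finset.natCast_card_filter]
          rw [← Fintype.sum_prod_type', ← (Fin.consEquiv fun _ => Fin n × Fin n).sum_comp]
          simp only [Fin.consEquiv, Equiv.coe_fn_mk, edgeMultiset_cons]
      _ = 2 ^ m * m.factorial * kappa E * (2 * E.card) := by
          rw [Finset.sum_congr rfl fun e _ => hfirst e, ← Finset.mul_sum, sum_loopWeight_mul_count]
      _ = 2 ^ (m + 1) * (m + 1).factorial * kappa E := by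
          rw [hE, Nat.factorial_succ]
          push_cast
          ring

lemma PBip_eq_bipartiteProb (n m : ℕ) : PBip n m = bipartiteProb (Fin n) m := by
  classical
  set edges : (Fin m → Fin n × Fin n) → Sym (Sym2 (Fin n)) m :=
    fun f => ⟨edgeMultiset f, card_edgeMultiset f⟩
  have hfiber (E : Sym (Sym2 (Fin n)) m) :
      ∑ f with edges f = E, (if TwoColorable (edgeSet f) then (1 : ℝ) else 0) =
        2 ^ m * m.factorial * if IsBipartite E.1 then (kappa E.1 : ℝ) else 0 := by
    have hcard : (({f | edges f = E} : Finset _).card : ℝ) = 2 ^ m * m.factorial * kappa E.1 := by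
      have hedges (f : Fin m → Fin n × Fin n) : edges f = E ↔ edgeMultiset f = E.1 :=
        Subtype.ext_iff
      simp only [hedges]
      exact_mod_cast card_filter_edgeMultiset_eq E.1 E.2
    calc ∑ f with edges f = E, (if TwoColorable (edgeSet f) then (1 : ℝ) else 0)
        = ∑ f with edges f = E, if IsBipartite E.1 then (1 : ℝ) else 0 :=
          Finset.sum_congr rfl fun f hf => by
            rw [← (Finset.mem_filter.mp hf).2, isBipartite_edgeMultiset_iff]
      _ = 2 ^ m * m.factorial * if IsBipartite E.1 then (kappa E.1 : ℝ) else 0 := by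
          rw [Finset.sum_const, nsmul_eq_mul, hcard]
          split_ifs <;> ring
  rw [PBip, bipartiteProb, prob, Fintype.expect_eq_sum_div_card,
    ← Finset.sum_fiberwise _ edges, Finset.sum_congr rfl fun E _ => hfiber E, ← Finset.mul_sum]
  simp only [Fintype.card_fun, Fintype.card_prod, Fintype.card_fin, Nat.cast_pow, Nat.cast_mul]
  rw [pow_mul, sq]
  ring

end Counting

theorem prob_bipartite_subcritical_general {m : ℕ → ℕ} {b : ℝ} (hb : b < 1 / 2)
    (hm : ∀ᶠ n : ℕ in Filter.atTop, (m n : ℝ) / n ≤ b) :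
    Filter.Tendsto (fun n : ℕ =>
        PBip n (m n) /
          ((1 - 2 * (m n : ℝ) / n) / (1 + 2 * (m n : ℝ) / n)) ^ ((1 : ℝ) / 4))
      Filter.atTop (nhds 1) := by
  obtain ⟨K, hK⟩ := exists_abs_bipartiteProb_div_limitProb_sub_one_le (β := 2 * b) (by linarith)
  have hdist : ∀ᶠ n : ℕ in Filter.atTop,
      |bipartiteProb (Fin n) (m n) / limitProb (meanDegree (Fin n) (m n)) - 1| ≤ K / n := by
    filter_upwards [hm, Filter.eventually_ne_atTop 0] with n hmn hn
    have : NeZero n := ⟨hn⟩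
    have hdegree : meanDegree (Fin n) (m n) ≤ 2 * b := by
      rw [meanDegree, Fintype.card_fin, mul_div_assoc]
      gcongr
    simpa using hK (Fin n) (m n) hdegree
  have hratio : Filter.Tendsto
      (fun n => bipartiteProb (Fin n) (m n) / limitProb (meanDegree (Fin n) (m n)))
      Filter.atTop (nhds 1) :=
    tendsto_iff_dist_tendsto_zero.mpr <| squeeze_zero' (.of_forall fun _ => dist_nonneg) hdist
      (tendsto_const_div_atTop_nhds_zero_nat K)
  simpa only [PBip_eq_bipartiteProb, limitProb, meanDegree, Fintype.card_fin] using hratio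

/-- probability of bipartiteness in the subcritical regime. -/
theorem prob_bipartite_subcritical (m : ℕ → ℕ)
    (hm : ∃ a b : ℝ, 0 < a ∧ a ≤ b ∧ b < 1 / 2 ∧
      ∀ᶠ n : ℕ in Filter.atTop, a ≤ (m n : ℝ) / n ∧ (m n : ℝ) / n ≤ b) :
    Filter.Tendsto (fun n : ℕ =>
        PBip n (m n) /
          ((1 - 2 * (m n : ℝ) / n) / (1 + 2 * (m n : ℝ) / n)) ^ ((1 : ℝ) / 4))
      Filter.atTop (nhds 1) := by
  obtain ⟨a, b, -, -, hb, hab⟩ := hm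
  exact prob_bipartite_subcritical_general hb (hab.mono fun n h => h.2)

end

end Inhomog
end

section
/- Fix an integer q ≥ 2 and let P(n,m) be the probability that a uniformly random pair (f, c), where f : Fin m → Fin n × Fin n is a sequence of m ordered pairs of vertices and c : Fin n → Fin q is a coloring, is properly colored, i.e. P(n,m) = #{(f,c) : ∀ i ∈ Fin m, c (f i).1 ≠ c (f i).2} / (n^{2m} · qⁿ). Then for every sequence m : ℕ → ℕ for which there exist 0 < a ≤ b < 1/2 with a ≤ m(n)/n ≤ b for all large n, the ratio P(n, m(n)) / [ (1 − 1/q)^m · (1 + (2m/n)/(q−1))^{−(q−1)/2} ] tends to 1 as n → ∞ (where m = m(n)). -/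
/-!
Place the `q` colours at the corners of a centred regular simplex in a `(q - 1)`-dimensional
Euclidean space, and let `S` be the sum, over all vertices of the graph, of the corners of their
colours. Since two corners have inner product `q - 1` or `-1`, a colouring `c` satisfies
`#{(v, w) | c v ≠ c w} / n² = (1 - 1/q) (1 - y)` with `y = ‖S‖² / ((q - 1) n²)`, so the probability
in question is `(1 - 1/q)^m` times the mean of `(1 - y)^m` over `c`. Replacing `(1 - y)^m` by
`exp (-m y)` costs at most `y`, whose mean is `1 / n`. Finally `exp (-m y) = exp (-τ ‖S‖² / n)` with
`τ = (m / n) / (q - 1)` is a Gaussian average of characters `exp (i √(2 τ / n) ⟪g, S⟫)`. For fixed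
`g` the mean of such a character over `c` is the `n`-th power of a characteristic function, and it
approaches `exp (-τ ‖g‖²)`, whose Gaussian integral is `(1 + 2 τ) ^ (-(q - 1) / 2)`.
-/

namespace Inhomog

noncomputable section

/-- Probability that a uniformly random pair of a sequence of `m` ordered pairs of
vertices (a random multigraph) and a `q`-coloring of the `n` vertices is properly
colored. -/
def PProper (q n m : ℕ) : ℝ :=
  (Nat.card {p : (Fin m → Fin n × Fin n) × (Fin n → Fin q) //
      ∀ i : Fin m, p.2 (p.1 i).1 ≠ p.2 (p.1 i).2} : ℝ) /
    ((n : ℝ) ^ (2 * m) * (q : ℝ) ^ n)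

section

open MeasureTheory ProbabilityTheory Filter Topology Asymptotics Finset
open Real (exp)
open Complex (I)
open scoped Real RealInnerProductSpace BigOperators

lemma norm_pow_sub_pow_le {R : Type*} [SeminormedCommRing R] [NormOneClass R] {a b : R}
    (ha : ‖a‖ ≤ 1) (hb : ‖b‖ ≤ 1) (n : ℕ) : ‖a ^ n - b ^ n‖ ≤ n * ‖a - b‖ := by
  induction n with
  | zero => simp
  | succ n ih =>
    calc ‖a ^ (n + 1) - b ^ (n + 1)‖ = ‖a * (a ^ n - b ^ n) + b ^ n * (a - b)‖ := by ring_nf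
      _ ≤ ‖a‖ * ‖a ^ n - b ^ n‖ + ‖b ^ n‖ * ‖a - b‖ :=
        norm_add_le_of_le (norm_mul_le _ _) (norm_mul_le _ _)
      _ ≤ 1 * (n * ‖a - b‖) + 1 * ‖a - b‖ := by
        gcongr
        exact (norm_pow_le b n).trans (pow_le_one₀ (norm_nonneg b) hb)
      _ = (n + 1 : ℕ) * ‖a - b‖ := by push_cast; ring

lemma exp_neg_mul_sub_one_sub_pow_le {y : ℝ} (h0 : 0 ≤ y) (h1 : y ≤ 1) (m : ℕ) :
    exp (-(m * y)) - (1 - y) ^ m ≤ y := by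
  have hexp : exp (-y) * (1 + y) ≤ 1 := by
    rw [Real.exp_neg, inv_mul_le_one₀ (Real.exp_pos y), add_comm]
    exact Real.add_one_le_exp y
  have hle : 1 - y ≤ exp (-y) := Real.one_sub_le_exp_neg y
  induction m with
  | zero => simpa
  | succ m ih =>
    calc exp (-((m + 1 : ℕ) * y)) - (1 - y) ^ (m + 1)
        = exp (-y) * (exp (-(m * y)) - (1 - y) ^ m) + (exp (-y) - (1 - y)) * (1 - y) ^ m := by
          have hsplit : exp (-((m + 1 : ℕ) * y)) = exp (-y) * exp (-(m * y)) := by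
            rw [← Real.exp_add]; push_cast; ring_nf
          rw [hsplit]; ring
      _ ≤ exp (-y) * y + (exp (-y) - (1 - y)) * 1 := by
          gcongr
          exact pow_le_one₀ (by linarith) (by linarith)
      _ ≤ y := by linarith

lemma abs_one_sub_pow_sub_exp_le {y : ℝ} (h0 : 0 ≤ y) (h1 : y ≤ 1) (m : ℕ) :
    |(1 - y) ^ m - exp (-(m * y))| ≤ y := by
  have hle : (1 - y) ^ m ≤ exp (-(m * y)) := by
    rw [← mul_neg, Real.exp_nat_mul]
    exact pow_le_pow_left₀ (by linarith) (Real.one_sub_le_exp_neg y) m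
  rw [abs_sub_comm, abs_of_nonneg (sub_nonneg.2 hle)]
  exact exp_neg_mul_sub_one_sub_pow_le h0 h1 m

lemma tendsto_div_nhds_one_of_tendsto_sub {α : Type*} {l : Filter α} {f g : α → ℝ} {δ : ℝ}
    (hδ : 0 < δ) (hg : ∀ᶠ n in l, δ ≤ g n)
    (h : Tendsto (fun n ↦ f n - g n) l (𝓝 0)) :
    Tendsto (fun n ↦ f n / g n) l (𝓝 1) := by
  have hone : (fun _ ↦ (1 : ℝ)) =O[l] g := by
    refine .of_bound δ⁻¹ (hg.mono fun n hn ↦ ?_)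
    rw [norm_one, Real.norm_of_nonneg (hδ.le.trans hn), inv_mul_eq_div, one_le_div hδ]
    exact hn
  have hequiv : f ~[l] g := ((isLittleO_one_iff ℝ).2 h).trans_isBigO hone
  exact (isEquivalent_iff_tendsto_one (hg.mono fun n hn ↦ (hδ.trans_le hn).ne')).1 hequiv

section Expect

variable {κ : Type*} [Fintype κ]

lemma norm_expect_cexp_le_one [Nonempty κ] (θ : κ → ℝ) :
    ‖𝔼 j, Complex.exp (θ j * I)‖ ≤ 1 :=
  (RCLike.norm_expect_le (K := ℂ)).trans (by simp [Complex.norm_exp_ofReal_mul_I])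

lemma cexp_mul_sub_taylor_isLittleO (z : ℂ) :
    (fun u : ℝ ↦ Complex.exp (u * z) - (1 + u * z + (u * z) ^ 2 / 2)) =o[𝓝 0] fun u ↦ u ^ 2 := by
  have hu : Tendsto (fun u : ℝ ↦ (u : ℂ) * z) (𝓝 0) (𝓝 0) :=
    Continuous.tendsto' (by fun_prop) _ _ (by simp)
  have h := (Complex.exp_sub_sum_range_succ_isLittleO_pow 2).comp_tendsto hu
  simp only [Function.comp_def, sum_range_succ, sum_range_zero] at h
  refine (h.congr_left fun u ↦ by norm_num [Nat.factorial]).trans_isBigO ?_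
  refine .of_bound (‖z‖ ^ 2) (.of_forall fun u ↦ ?_)
  simp [mul_pow, mul_comm]

lemma cexp_sq_mul_sub_isLittleO (z : ℂ) :
    (fun u : ℝ ↦ Complex.exp (u ^ 2 * z) - (1 + u ^ 2 * z)) =o[𝓝 0] fun u ↦ u ^ 2 := by
  have hu : Tendsto (fun u : ℝ ↦ (u : ℂ) ^ 2 * z) (𝓝 0) (𝓝 0) :=
    Continuous.tendsto' (by fun_prop) _ _ (by simp)
  have h := (Complex.exp_sub_sum_range_succ_isLittleO_pow 1).comp_tendsto hu
  simp only [Function.comp_def, sum_range_succ, sum_range_zero] at h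
  refine (h.congr_left fun u ↦ by norm_num [Nat.factorial]).trans_isBigO ?_
  refine .of_bound ‖z‖ (.of_forall fun u ↦ ?_)
  simp [mul_comm]

lemma expect_cexp_sub_cexp_isLittleO [Nonempty κ] {d : κ → ℝ} (hd : ∑ j, d j = 0) :
    (fun u : ℝ ↦ 𝔼 j, Complex.exp ((u * d j : ℝ) * I) - (exp (-(u ^ 2 / 2 * 𝔼 j, d j ^ 2)) : ℂ))
      =o[𝓝 0] fun u ↦ u ^ 2 := by
  have hκ : (Fintype.card κ : ℂ) ≠ 0 := by simp
  have hd' : ∑ j, (d j : ℂ) = 0 := by exact_mod_cast hd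
  have hsum := IsLittleO.sum (s := univ) fun j _ ↦ cexp_mul_sub_taylor_isLittleO (d j * I)
  have hexp := cexp_sq_mul_sub_isLittleO (-(𝔼 j, d j ^ 2 : ℝ) / 2)
  refine ((hsum.const_mul_left (Fintype.card κ : ℂ)⁻¹).sub hexp).congr_left fun u ↦ ?_
  have hmean : (Fintype.card κ : ℂ)⁻¹ * ∑ j, (1 + u * (d j * I) + (u * (d j * I)) ^ 2 / 2) =
      1 + u ^ 2 * (-(𝔼 j, d j ^ 2 : ℝ) / 2) := by
    simp only [mul_pow, Complex.I_sq, sum_add_distrib, ← mul_sum, ← sum_mul, ← sum_div, hd',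
      Fintype.expect_eq_sum_div_card]
    push_cast
    simp only [sum_const, card_univ, nsmul_eq_mul]
    field_simp
    ring
  have hphase (j : κ) : (u : ℂ) * (d j * I) = (u * d j : ℝ) * I := by push_cast; ring
  have hvar : (u : ℂ) ^ 2 * (-(𝔼 j, d j ^ 2 : ℝ) / 2) = (-(u ^ 2 / 2 * 𝔼 j, d j ^ 2) : ℝ) := by
    push_cast; ring
  rw [Finset.sum_apply, sum_sub_distrib, mul_sub, hmean, hvar, Complex.ofReal_exp,
    Fintype.expect_eq_sum_div_card (fun j ↦ Complex.exp ((u * d j : ℝ) * I)), div_eq_inv_mul]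
  simp only [hphase]
  ring

lemma tendsto_expect_cexp_pow_sub [Nonempty κ] {d : κ → ℝ} (hd : ∑ j, d j = 0) {u : ℕ → ℝ}
    (hu : Tendsto u atTop (𝓝 0)) (hu' : (fun n : ℕ ↦ n * u n ^ 2) =O[atTop] fun _ ↦ (1 : ℝ)) :
    Tendsto (fun n : ℕ ↦ (𝔼 j, Complex.exp ((u n * d j : ℝ) * I)) ^ n -
      (exp (-(n * u n ^ 2 / 2 * 𝔼 j, d j ^ 2)) : ℂ)) atTop (𝓝 0) := by
  rw [← isLittleO_one_iff ℝ]
  have hlim := ((isBigO_refl (fun n : ℕ ↦ (n : ℝ)) atTop).mul_isLittleO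
    ((expect_cexp_sub_cexp_isLittleO hd).comp_tendsto hu).norm_left).trans_isBigO hu'
  refine (IsBigO.of_bound 1 (.of_forall fun n ↦ ?_)).trans_isLittleO hlim
  have hpow : exp (-(n * u n ^ 2 / 2 * 𝔼 j, d j ^ 2)) =
      exp (-(u n ^ 2 / 2 * 𝔼 j, d j ^ 2)) ^ n := by
    rw [← Real.exp_nat_mul]; ring_nf
  have hE : 0 ≤ 𝔼 j, d j ^ 2 := expect_nonneg fun j _ ↦ sq_nonneg _
  rw [hpow, one_mul, Complex.ofReal_pow]
  refine (norm_pow_sub_pow_le (norm_expect_cexp_le_one _) ?_ n).trans (le_abs_self _)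
  rw [Complex.norm_real, Real.norm_of_nonneg (Real.exp_pos _).le, Real.exp_le_one_iff]
  exact neg_nonpos.2 (mul_nonneg (by positivity) hE)

section SecondMoment

variable {E : Type*} [NormedAddCommGroup E] [InnerProductSpace ℝ E]

lemma expect_norm_sq_sum [Nonempty κ] {x : κ → E} (hx : ∑ j, x j = 0) (n : ℕ) :
    𝔼 c : Fin n → κ, ‖∑ v, x (c v)‖ ^ 2 = n * 𝔼 j, ‖x j‖ ^ 2 := by
  have hcross (y : E) : 𝔼 j, ‖x j + y‖ ^ 2 = 𝔼 j, ‖x j‖ ^ 2 + ‖y‖ ^ 2 := by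
    simp_rw [norm_add_sq_real, expect_add_distrib, ← mul_expect, Fintype.expect_const,
      Fintype.expect_eq_sum_div_card fun j ↦ ⟪x j, y⟫, ← sum_inner, hx]
    simp
  induction n with
  | zero => simp
  | succ n ih =>
    rw [← Fintype.expect_equiv (Fin.consEquiv fun _ ↦ κ) (fun p ↦ ‖x p.1 + ∑ v, x (p.2 v)‖ ^ 2) _
      (by simp [Fin.sum_univ_succ]), ← univ_product_univ, expect_product, expect_comm]
    simp only [hcross, expect_add_distrib, ih, Fintype.expect_const]
    push_cast
    ring

end SecondMoment

end Expect

section Gaussian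

variable {E : Type*} [NormedAddCommGroup E] [InnerProductSpace ℝ E] [FiniteDimensional ℝ E]
  [MeasurableSpace E] [BorelSpace E]

lemma integral_exp_neg_mul_sq_gaussianReal {s : ℝ} (hs : 0 < 1 + 2 * s) :
    ∫ x, exp (-(s * x ^ 2)) ∂gaussianReal 0 1 = (1 + 2 * s) ^ (-(1 / 2) : ℝ) := by
  have hdensity (x : ℝ) : gaussianPDFReal 0 1 x • exp (-(s * x ^ 2)) =
      (√(2 * π))⁻¹ * exp (-((1 + 2 * s) / 2) * x ^ 2) := by
    simp only [gaussianPDFReal, smul_eq_mul, NNReal.coe_one, mul_one, sub_zero]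
    rw [mul_assoc, ← Real.exp_add]
    ring_nf
  have hratio : π / ((1 + 2 * s) / 2) = 2 * π / (1 + 2 * s) := by field_simp
  rw [integral_gaussianReal_eq_integral_smul one_ne_zero]
  simp_rw [hdensity]
  rw [integral_const_mul, integral_gaussian, hratio, Real.sqrt_div (by positivity),
    ← mul_div_assoc, inv_mul_cancel₀ (by positivity), Real.rpow_neg hs.le, ← Real.sqrt_eq_rpow,
    one_div]

variable (E) in
lemma integral_exp_neg_mul_norm_sq_stdGaussian {s : ℝ} (hs : 0 < 1 + 2 * s) :
    ∫ g, exp (-(s * ‖g‖ ^ 2)) ∂stdGaussian E =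
      (1 + 2 * s) ^ (-(Module.finrank ℝ E / 2) : ℝ) := by
  have hnorm (x : Fin (Module.finrank ℝ E) → ℝ) :
      ‖∑ i, x i • stdOrthonormalBasis ℝ E i‖ ^ 2 = ∑ i, x i ^ 2 := by
    simp [← (stdOrthonormalBasis ℝ E).sum_sq_norm_inner_right,
      (stdOrthonormalBasis ℝ E).orthonormal.inner_right_fintype]
  rw [stdGaussian, integral_map (Measurable.aemeasurable (by fun_prop))
    (Measurable.aestronglyMeasurable (by fun_prop))]
  simp_rw [hnorm, mul_sum, ← sum_neg_distrib, Real.exp_sum]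
  rw [integral_fintype_prod_eq_prod (f := fun _ x ↦ exp (-(s * x ^ 2)))]
  simp only [integral_exp_neg_mul_sq_gaussianReal hs, prod_const, card_univ, Fintype.card_fin]
  rw [← Real.rpow_natCast, ← Real.rpow_mul hs.le]
  ring_nf

lemma integral_cexp_sqrt_mul_inner_stdGaussian {s : ℝ} (hs : 0 ≤ s) (x : E) :
    ∫ g, Complex.exp ((√(2 * s) * ⟪g, x⟫ : ℝ) * I) ∂stdGaussian E =
      (exp (-(s * ‖x‖ ^ 2)) : ℂ) := by
  have hsq : √(2 * s) ^ 2 = 2 * s := Real.sq_sqrt (by positivity)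
  calc ∫ g, Complex.exp ((√(2 * s) * ⟪g, x⟫ : ℝ) * I) ∂stdGaussian E
      = charFun (stdGaussian E) (√(2 * s) • x) := by
        simp only [charFun_apply, real_inner_smul_right]
    _ = (exp (-(√(2 * s) ^ 2 * ‖x‖ ^ 2 / 2)) : ℂ) := by
      rw [charFun_stdGaussian, norm_smul, Real.norm_of_nonneg (Real.sqrt_nonneg _)]
      push_cast
      ring_nf
    _ = (exp (-(s * ‖x‖ ^ 2)) : ℂ) := by rw [hsq]; ring_nf

lemma expect_exp_neg_mul_norm_sq_sum_eq_integral {κ : Type*} [Fintype κ] (x : κ → E) (n : ℕ)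
    {s : ℝ} (hs : 0 ≤ s) :
    ((𝔼 c : Fin n → κ, exp (-(s * ‖∑ v, x (c v)‖ ^ 2)) : ℝ) : ℂ) =
      ∫ g, (𝔼 j, Complex.exp ((√(2 * s) * ⟪g, x j⟫ : ℝ) * I)) ^ n ∂stdGaussian E := by
  have hpow (g : E) : (𝔼 j, Complex.exp ((√(2 * s) * ⟪g, x j⟫ : ℝ) * I)) ^ n =
      𝔼 c : Fin n → κ, Complex.exp ((√(2 * s) * ⟪g, ∑ v, x (c v)⟫ : ℝ) * I) := by
    simp only [expect_pow, Fintype.piFinset_univ, ← Complex.exp_sum, inner_sum, mul_sum,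
      Complex.ofReal_sum, sum_mul]
  have hint (c : Fin n → κ) : Integrable
      (fun g : E ↦ Complex.exp ((√(2 * s) * ⟪g, ∑ v, x (c v)⟫ : ℝ) * I)) (stdGaussian E) :=
    .of_bound (Continuous.aestronglyMeasurable (by fun_prop)) 1
      (.of_forall fun g ↦ (Complex.norm_exp_ofReal_mul_I _).le)
  simp_rw [hpow, Fintype.expect_eq_sum_div_card]
  rw [integral_div, integral_finsetSum _ fun c _ ↦ hint c]
  simp_rw [integral_cexp_sqrt_mul_inner_stdGaussian hs]
  push_cast
  rfl

end Gaussian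

section CLT

variable {κ E : Type*} [Fintype κ] [Nonempty κ] [NormedAddCommGroup E] [InnerProductSpace ℝ E]

lemma tendsto_expect_cexp_inner_pow_sub {x : κ → E} (hx : ∑ j, x j = 0)
    (hiso : ∀ g, 𝔼 j, ⟪g, x j⟫ ^ 2 = ‖g‖ ^ 2) {τ : ℕ → ℝ} (h0 : ∀ n, 0 ≤ τ n)
    (hτ : IsBoundedUnder (· ≤ ·) atTop τ) (g : E) :
    Tendsto (fun n : ℕ ↦ (𝔼 j, Complex.exp ((√(2 * (τ n / n)) * ⟪g, x j⟫ : ℝ) * I)) ^ n -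
      (exp (-(τ n * ‖g‖ ^ 2)) : ℂ)) atTop (𝓝 0) := by
  have hO : τ =O[atTop] fun _ ↦ (1 : ℝ) := by
    simpa only [isBigO_one_iff, Real.norm_of_nonneg (h0 _)] using hτ
  have hsq (n : ℕ) (hn : n ≠ 0) : n * √(2 * (τ n / n)) ^ 2 = 2 * τ n := by
    rw [Real.sq_sqrt (by have := h0 n; positivity)]
    field_simp
  have hu : Tendsto (fun n : ℕ ↦ √(2 * (τ n / n))) atTop (𝓝 0) := by
    have hdiv : Tendsto (fun n : ℕ ↦ τ n / n) atTop (𝓝 0) := by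
      have h := hO.mul_isLittleO
        ((isLittleO_one_iff ℝ).2 (tendsto_inv_atTop_nhds_zero_nat (𝕜 := ℝ)))
      simpa only [div_eq_mul_inv, one_mul, isLittleO_one_iff] using h
    simpa using (hdiv.const_mul 2).sqrt
  have hu' : (fun n : ℕ ↦ n * √(2 * (τ n / n)) ^ 2) =O[atTop] fun _ ↦ (1 : ℝ) :=
    (hO.const_mul_left 2).congr' ((eventually_ne_atTop 0).mono fun n hn ↦ (hsq n hn).symm) .rfl
  have hsum : ∑ j, ⟪g, x j⟫ = 0 := by rw [← inner_sum, hx, inner_zero_right]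
  refine (tendsto_expect_cexp_pow_sub hsum hu hu').congr' ?_
  filter_upwards [eventually_ne_atTop 0] with n hn
  rw [hsq n hn, hiso, mul_div_cancel_left₀ _ two_ne_zero]

theorem tendsto_expect_exp_neg_mul_norm_sq_sum_sub [FiniteDimensional ℝ E] {x : κ → E}
    (hx : ∑ j, x j = 0) (hiso : ∀ g, 𝔼 j, ⟪g, x j⟫ ^ 2 = ‖g‖ ^ 2) {τ : ℕ → ℝ}
    (h0 : ∀ n, 0 ≤ τ n) (hτ : IsBoundedUnder (· ≤ ·) atTop τ) :
    Tendsto (fun n : ℕ ↦ 𝔼 c : Fin n → κ, exp (-(τ n / n * ‖∑ v, x (c v)‖ ^ 2)) -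
      (1 + 2 * τ n) ^ (-(Module.finrank ℝ E / 2) : ℝ)) atTop (𝓝 0) := by
  borelize E
  set γ := stdGaussian E
  let φ (n : ℕ) (g : E) : ℂ := (𝔼 j, Complex.exp ((√(2 * (τ n / n)) * ⟪g, x j⟫ : ℝ) * I)) ^ n
  let ψ (n : ℕ) (g : E) : ℂ := (exp (-(τ n * ‖g‖ ^ 2)) : ℂ)
  have hφ_bound (n : ℕ) (g : E) : ‖φ n g‖ ≤ 1 := by
    rw [norm_pow]
    exact pow_le_one₀ (norm_nonneg _) (norm_expect_cexp_le_one _)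
  have hψ_bound (n : ℕ) (g : E) : ‖ψ n g‖ ≤ 1 := by
    rw [Complex.norm_real, Real.norm_of_nonneg (Real.exp_pos _).le, Real.exp_le_one_iff]
    exact neg_nonpos.2 (mul_nonneg (h0 n) (sq_nonneg _))
  have hφ_int (n : ℕ) : Integrable (φ n) γ := by
    refine .of_bound (Continuous.aestronglyMeasurable ?_) 1 (.of_forall (hφ_bound n))
    simp only [φ, Fintype.expect_eq_sum_div_card]
    fun_prop
  have hψ_int (n : ℕ) : Integrable (ψ n) γ :=
    .of_bound (Continuous.aestronglyMeasurable (by fun_prop)) 1 (.of_forall (hψ_bound n))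
  have hlim : Tendsto (fun n ↦ ∫ g, φ n g - ψ n g ∂γ) atTop (𝓝 (∫ _, 0 ∂γ)) :=
    tendsto_integral_of_dominated_convergence (fun _ ↦ 1 + 1)
      (fun n ↦ ((hφ_int n).sub (hψ_int n)).aestronglyMeasurable) (integrable_const _)
      (fun n ↦ .of_forall fun g ↦ norm_sub_le_of_le (hφ_bound n g) (hψ_bound n g))
      (.of_forall fun g ↦ tendsto_expect_cexp_inner_pow_sub hx hiso h0 hτ g)
  rw [integral_zero] at hlim
  rw [← tendsto_ofReal_iff, Complex.ofReal_zero]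
  refine hlim.congr fun n ↦ ?_
  rw [integral_sub (hφ_int n) (hψ_int n), Complex.ofReal_sub,
    expect_exp_neg_mul_norm_sq_sum_eq_integral x n (div_nonneg (h0 n) n.cast_nonneg),
    ← integral_exp_neg_mul_norm_sq_stdGaussian E (by linarith [h0 n]), ← integral_complex_ofReal]

end CLT

lemma card_sub_one_pos (κ : Type*) [Fintype κ] [Nontrivial κ] : 0 < (Fintype.card κ : ℝ) - 1 :=
  sub_pos.2 (Nat.one_lt_cast.2 Fintype.one_lt_card)

section Simplex

variable (κ : Type*) [Fintype κ]

/-- The hyperplane of vectors in `ℝ^κ` with coordinate sum zero: the ambient Euclidean space of the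
regular simplex with vertex set `κ`. -/
def sumZero : Submodule ℝ (EuclideanSpace ℝ κ) :=
  (ℝ ∙ (WithLp.toLp 2 1 : EuclideanSpace ℝ κ))ᗮ

variable {κ} in
lemma mem_sumZero {g : EuclideanSpace ℝ κ} : g ∈ sumZero κ ↔ ∑ j, g j = 0 := by
  simp [sumZero, Submodule.mem_orthogonal_singleton_iff_inner_right, PiLp.inner_apply]

lemma finrank_sumZero_add_one [Nonempty κ] :
    Module.finrank ℝ (sumZero κ) + 1 = Fintype.card κ := by
  have hone : (WithLp.toLp 2 1 : EuclideanSpace ℝ κ) ≠ 0 := by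
    intro h
    simpa using congr($h (Classical.arbitrary κ))
  rw [← finrank_euclideanSpace (𝕜 := ℝ) (ι := κ), ← finrank_span_singleton (K := ℝ) hone,
    add_comm, sumZero, Submodule.finrank_add_finrank_orthogonal]

variable {κ} [DecidableEq κ]

/-- The vertex of the centred regular simplex that represents `j`, with the scaling chosen so that a
uniformly random vertex has identity covariance. -/
def simplexVertex (j : κ) : sumZero κ :=
  ⟨WithLp.toLp 2 fun k ↦
    √(Fintype.card κ) * ((if k = j then 1 else 0) - (Fintype.card κ : ℝ)⁻¹), by
    have : Nonempty κ := ⟨j⟩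
    simp [mem_sumZero, ← mul_sum, sum_sub_distrib]⟩

lemma inner_simplexVertex (g : sumZero κ) (j : κ) :
    ⟪g, simplexVertex j⟫ = √(Fintype.card κ) * (g : EuclideanSpace ℝ κ) j := by
  have hg := mem_sumZero.1 g.2
  simp only [simplexVertex, Submodule.coe_inner, PiLp.inner_apply, RCLike.inner_apply, conj_trivial,
    mul_assoc, ← mul_sum, sub_mul, sum_sub_distrib, ite_mul, hg]
  simp

lemma sum_simplexVertex : ∑ j : κ, simplexVertex j = 0 := by
  refine ext_inner_left ℝ fun g ↦ ?_
  simp_rw [inner_sum, inner_simplexVertex, ← mul_sum, mem_sumZero.1 g.2, mul_zero, inner_zero_right]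

lemma expect_inner_simplexVertex_sq [Nonempty κ] (g : sumZero κ) :
    𝔼 j, ⟪g, simplexVertex j⟫ ^ 2 = ‖g‖ ^ 2 := by
  simp_rw [inner_simplexVertex, mul_pow, Real.sq_sqrt (Nat.cast_nonneg _), ← mul_expect,
    Fintype.expect_eq_sum_div_card, Submodule.coe_norm, EuclideanSpace.norm_sq_eq, Real.norm_eq_abs,
    sq_abs]
  field_simp

lemma inner_simplexVertex_simplexVertex (j k : κ) :
    ⟪simplexVertex j, simplexVertex k⟫ =
      (Fintype.card κ : ℝ) * (if j = k then 1 else 0) - 1 := by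
  have : Nonempty κ := ⟨j⟩
  rw [inner_simplexVertex]
  simp only [simplexVertex]
  rw [← mul_assoc, Real.mul_self_sqrt (Nat.cast_nonneg _), mul_sub, mul_inv_cancel₀ (by simp)]
  simp [eq_comm]

lemma norm_sq_simplexVertex (j : κ) : ‖simplexVertex j‖ ^ 2 = (Fintype.card κ : ℝ) - 1 := by
  rw [← real_inner_self_eq_norm_sq, inner_simplexVertex_simplexVertex, if_pos rfl, mul_one]

end Simplex

section Coloring

variable {κ V : Type*} [DecidableEq κ] [Fintype V]

/-- The ordered pairs of vertices receiving distinct colours under `c`: the edges that may be drawn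
without making `c` improper. -/
def bichromaticPairs (c : V → κ) : Finset (V × V) := {p | c p.1 ≠ c p.2}

lemma card_proper_eq_sum_card_bichromaticPairs_pow [Fintype κ] [DecidableEq V] (m : ℕ) :
    Nat.card {p : (Fin m → V × V) × (V → κ) // ∀ i, p.2 (p.1 i).1 ≠ p.2 (p.1 i).2} =
      ∑ c : V → κ, #(bichromaticPairs c) ^ m := by
  have hfiber (c : V → κ) :
      ({f | ∀ i, c (f i).1 ≠ c (f i).2} : Finset (Fin m → V × V)) =
        Fintype.piFinset fun _ ↦ bichromaticPairs c := by
    ext f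
    simp [bichromaticPairs, Fintype.mem_piFinset]
  simp_rw [← Fintype.card_piFinset_const, ← hfiber, card_filter]
  rw [← Fintype.sum_prod_type_right', Nat.card_eq_fintype_card, Fintype.card_subtype, card_filter]

lemma norm_sq_sum_simplexVertex [Fintype κ] (c : V → κ) :
    ‖∑ v, simplexVertex (c v)‖ ^ 2 = ((Fintype.card κ : ℝ) - 1) * Fintype.card V ^ 2 -
      Fintype.card κ * #(bichromaticPairs c) := by
  have hentry (p : V × V) : ⟪simplexVertex (c p.1), simplexVertex (c p.2)⟫ =
      ((Fintype.card κ : ℝ) - 1) - Fintype.card κ * (if c p.1 ≠ c p.2 then 1 else 0) := by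
    rw [inner_simplexVertex_simplexVertex]
    split_ifs <;> simp_all
  rw [← real_inner_self_eq_norm_sq, sum_inner]
  simp_rw [inner_sum]
  rw [← Fintype.sum_prod_type' fun v w ↦ ⟪simplexVertex (c v), simplexVertex (c w)⟫]
  simp_rw [hentry]
  rw [sum_sub_distrib, ← mul_sum, sum_boole, sum_const, card_univ, Fintype.card_prod, nsmul_eq_mul,
    ← bichromaticPairs]
  push_cast
  ring

/-- The relative excess of monochromatic pairs in the colouring `c`, measured by the squared length
of the sum, over all `v : V`, of the simplex vertices that represent `c v`. It is `0` when all
colour classes have the same size and `1` when `c` is constant. -/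
def imbalance [Fintype κ] (c : V → κ) : ℝ :=
  ‖∑ v, simplexVertex (c v)‖ ^ 2 / (((Fintype.card κ : ℝ) - 1) * Fintype.card V ^ 2)

end Coloring

section Imbalance

variable {κ V : Type*} [Fintype κ] [Nontrivial κ] [DecidableEq κ] [Fintype V]

lemma card_bichromaticPairs_div [Nonempty V] (c : V → κ) :
    (#(bichromaticPairs c) : ℝ) / Fintype.card V ^ 2 =
      (1 - 1 / (Fintype.card κ : ℝ)) * (1 - imbalance c) := by
  have hκ := (card_sub_one_pos κ).ne'
  rw [imbalance, norm_sq_sum_simplexVertex]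
  field_simp
  ring

lemma imbalance_nonneg (c : V → κ) : 0 ≤ imbalance c :=
  div_nonneg (sq_nonneg _) (mul_nonneg (card_sub_one_pos κ).le (sq_nonneg _))

lemma imbalance_le_one (c : V → κ) : imbalance c ≤ 1 := by
  refine div_le_one_of_le₀ ?_ (mul_nonneg (card_sub_one_pos κ).le (sq_nonneg _))
  rw [norm_sq_sum_simplexVertex]
  exact sub_le_self _ (by positivity)

lemma expect_imbalance {n : ℕ} (hn : n ≠ 0) : 𝔼 c : Fin n → κ, imbalance c = 1 / n := by
  have hκ := (card_sub_one_pos κ).ne'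
  simp_rw [imbalance, ← expect_div, expect_norm_sq_sum (E := sumZero κ) sum_simplexVertex,
    norm_sq_simplexVertex, Fintype.expect_const, Fintype.card_fin]
  field_simp

lemma abs_expect_one_sub_imbalance_pow_sub_le {n : ℕ} (hn : n ≠ 0) (m : ℕ) :
    |𝔼 c : Fin n → κ, (1 - imbalance c) ^ m - 𝔼 c : Fin n → κ, exp (-(m * imbalance c))| ≤
      1 / n := by
  rw [← expect_sub_distrib, ← expect_imbalance (κ := κ) hn]
  exact (abs_expect_le _ _).trans <| expect_le_expect fun c _ ↦
    abs_one_sub_pow_sub_exp_le (imbalance_nonneg c) (imbalance_le_one c) m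

lemma tendsto_expect_one_sub_imbalance_pow_sub {m : ℕ → ℕ}
    (hm : IsBoundedUnder (· ≤ ·) atTop fun n ↦ (m n : ℝ) / n) :
    Tendsto (fun n : ℕ ↦ 𝔼 c : Fin n → κ, (1 - imbalance c) ^ m n -
      (1 + 2 * (m n : ℝ) / n / ((Fintype.card κ : ℝ) - 1)) ^
        (-(((Fintype.card κ : ℝ) - 1) / 2))) atTop (𝓝 0) := by
  set r := (Fintype.card κ : ℝ) - 1 with hr
  have hr0 : 0 < r := card_sub_one_pos κ
  let τ (n : ℕ) : ℝ := m n / n / r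
  have hτ : IsBoundedUnder (· ≤ ·) atTop τ :=
    (monotone_div_right_of_nonneg hr0.le).isBoundedUnder_le_comp hm
  have hclt := tendsto_expect_exp_neg_mul_norm_sq_sum_sub (E := sumZero κ) sum_simplexVertex
    (expect_inner_simplexVertex_sq (κ := κ)) (fun n ↦ by positivity) hτ
  have hexp : Tendsto (fun n : ℕ ↦ 𝔼 c : Fin n → κ, (1 - imbalance c) ^ m n -
      𝔼 c : Fin n → κ, exp (-(m n * imbalance c))) atTop (𝓝 0) :=
    squeeze_zero_norm' ((eventually_ne_atTop 0).mono fun n hn ↦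
      abs_expect_one_sub_imbalance_pow_sub_le hn (m n)) tendsto_one_div_atTop_nhds_zero_nat
  have hdim : (Module.finrank ℝ (sumZero κ) : ℝ) = r := by
    rw [hr, ← finrank_sumZero_add_one κ]
    push_cast
    ring
  refine (add_zero (0 : ℝ) ▸ hexp.add hclt).congr fun n ↦ ?_
  have hexponent (c : Fin n → κ) :
      m n * imbalance c = τ n / n * ‖∑ v, simplexVertex (c v)‖ ^ 2 := by
    simp only [imbalance, Fintype.card_fin, τ, ← hr]
    field_simp
  have hbase : 2 * τ n = 2 * (m n : ℝ) / n / r := by simp only [τ]; ring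
  simp only [hexponent, hdim, hbase, sub_add_sub_cancel]

theorem tendsto_expect_one_sub_imbalance_pow_div {m : ℕ → ℕ}
    (hm : IsBoundedUnder (· ≤ ·) atTop fun n ↦ (m n : ℝ) / n) :
    Tendsto (fun n : ℕ ↦ (𝔼 c : Fin n → κ, (1 - imbalance c) ^ m n) /
      (1 + 2 * (m n : ℝ) / n / ((Fintype.card κ : ℝ) - 1)) ^
        (-(((Fintype.card κ : ℝ) - 1) / 2))) atTop (𝓝 1) := by
  have hr := card_sub_one_pos κ
  obtain ⟨T, hT⟩ := hm.eventually_le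
  have hbase : ∀ᶠ n : ℕ in atTop, 1 + 2 * (m n : ℝ) / n / ((Fintype.card κ : ℝ) - 1) ≤
      1 + 2 * max T 0 / ((Fintype.card κ : ℝ) - 1) := by
    filter_upwards [hT] with n hn
    rw [mul_div_assoc]
    gcongr
    exact hn.trans (le_max_left T 0)
  exact tendsto_div_nhds_one_of_tendsto_sub (Real.rpow_pos_of_pos (by positivity) _)
    (hbase.mono fun n hn ↦ Real.rpow_le_rpow_of_nonpos (by positivity) hn (by linarith))
    (tendsto_expect_one_sub_imbalance_pow_sub hm)

end Imbalance

lemma pProper_eq_pow_mul_expect {q n : ℕ} (hq : 2 ≤ q) (hn : n ≠ 0) (m : ℕ) :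
    PProper q n m =
      (1 - 1 / (q : ℝ)) ^ m * 𝔼 c : Fin n → Fin q, (1 - imbalance c) ^ m := by
  have : Nontrivial (Fin q) := Fin.nontrivial_iff_two_le.2 hq
  have : NeZero n := ⟨hn⟩
  have hpow (c : Fin n → Fin q) : ((1 - 1 / (q : ℝ)) * (1 - imbalance c)) ^ m =
      #(bichromaticPairs c) ^ m / n ^ (2 * m) := by
    have h := card_bichromaticPairs_div c
    rw [Fintype.card_fin, Fintype.card_fin] at h
    rw [← h, div_pow, pow_mul]
  simp_rw [mul_expect, ← mul_pow, hpow]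
  rw [← expect_div, Fintype.expect_eq_sum_div_card, PProper,
    card_proper_eq_sum_card_bichromaticPairs_pow, div_div]
  simp [mul_comm]

theorem prob_proper_coloring_general (q : ℕ) (hq : 2 ≤ q) (m : ℕ → ℕ)
    (hm : IsBoundedUnder (· ≤ ·) atTop fun n : ℕ ↦ (m n : ℝ) / n) :
    Tendsto (fun n : ℕ ↦
        PProper q n (m n) /
          ((1 - 1 / (q : ℝ)) ^ m n *
            (1 + (2 * (m n : ℝ) / n) / ((q : ℝ) - 1)) ^ (-(((q : ℝ) - 1) / 2))))
      atTop (𝓝 1) := by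
  have : Nontrivial (Fin q) := Fin.nontrivial_iff_two_le.2 hq
  have hfactor : 1 - 1 / (q : ℝ) ≠ 0 := by
    have hq1 : (1 : ℝ) < q := by exact_mod_cast hq
    exact (sub_pos.2 ((div_lt_one (by linarith)).2 hq1)).ne'
  have hlim := tendsto_expect_one_sub_imbalance_pow_div (κ := Fin q) hm
  rw [Fintype.card_fin] at hlim
  refine hlim.congr' ?_
  filter_upwards [eventually_ne_atTop 0] with n hn
  rw [pProper_eq_pow_mul_expect hq hn, mul_div_mul_left _ _ (pow_ne_zero _ hfactor)]

end

/-- Wright's asymptotics for the probability that a random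
`q`-coloring of a random multigraph is proper, in the subcritical regime. -/
theorem prob_proper_coloring (q : ℕ) (hq : 2 ≤ q) (m : ℕ → ℕ)
    (hm : ∃ a b : ℝ, 0 < a ∧ a ≤ b ∧ b < 1 / 2 ∧
      ∀ᶠ n : ℕ in Filter.atTop, a ≤ (m n : ℝ) / n ∧ (m n : ℝ) / n ≤ b) :
    Filter.Tendsto (fun n : ℕ =>
        PProper q n (m n) /
          ((1 - 1 / (q : ℝ)) ^ m n *
            (1 + (2 * (m n : ℝ) / n) / ((q : ℝ) - 1)) ^ (-(((q : ℝ) - 1) / 2))))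
      Filter.atTop (nhds 1) := by
  obtain ⟨_, b, -, -, -, hb⟩ := hm
  exact prob_proper_coloring_general q hq m
    (Filter.isBoundedUnder_of_eventually_le (hb.mono fun _ hn ↦ hn.2))

end

end Inhomog
end
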